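/- Invariance of D_4^+ singularities under isometric and anti-isometric deformations: let f be a generalized timelike minimal surface with real Weierstrass data (g1, g2, ω1 du, ω2 dv) and let p be an ω-singular point of f. Then the following are equivalent: (i) f is A-equivalent at p to the D_4^+ singularity f_{D4+}(u,v) = (uv, u^2 + 3v^2, u^2v + v^3) at the origin; (ii) for every θ ∈ R the associated family member f_θ is A-equivalent at p to the D_4^+ singularity; (iii) the conjugate surface f̂ is A-equivalent at p to the D_4^+ singularity. -/

import Mathlib

noncomputable section

open Real Filter

abbrev R2 : Type := ℝ × ℝ
abbrev R3 : Type := ℝ × ℝ × ℝ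

/-- The partial derivative in the `u`-direction. -/
def pu (f : R2 → R3) (p : R2) : R3 := fderiv ℝ f p (1, 0)
/-- The partial derivative in the `v`-direction. -/
def pv (f : R2 → R3) (p : R2) : R3 := fderiv ℝ f p (0, 1)

/-- Determinant of three column vectors in ℝ³. -/
def det3 (a b c : R3) : ℝ :=
  a.1 * (b.2.1 * c.2.2 - b.2.2 * c.2.1)
  - b.1 * (a.2.1 * c.2.2 - a.2.2 * c.2.1)
  + c.1 * (a.2.1 * b.2.2 - a.2.2 * b.2.1)

/-- Determinant of two vectors in ℝ². -/
def det2 (a b : R2) : ℝ := a.1 * b.2 - a.2 * b.1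

/-- Euclidean inner product on ℝ³. -/
def ip3 (a b : R3) : ℝ := a.1 * b.1 + a.2.1 * b.2.1 + a.2.2 * b.2.2

/-- `f : ℝ² → ℝ³ = 𝕃³` is the generalized timelike minimal surface with real Weierstrass
data `(g1, g2, w1 du, w2 dv)`: it is smooth, its partial derivatives are
`f_u = (ω1/2)·(-1-g1², 1-g1², 2g1)` and `f_v = (ω2/2)·(1+g2², 1-g2², -2g2)`
(which encodes the Weierstrass-type integral representation), and it is an immersion
on an open dense set. -/
structure IsGTMS (f : R2 → R3) (g1 g2 w1 w2 : ℝ → ℝ) : Prop where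
  smooth_f : ContDiff ℝ (⊤ : ℕ∞) f
  smooth_g1 : ContDiff ℝ (⊤ : ℕ∞) g1
  smooth_g2 : ContDiff ℝ (⊤ : ℕ∞) g2
  smooth_w1 : ContDiff ℝ (⊤ : ℕ∞) w1
  smooth_w2 : ContDiff ℝ (⊤ : ℕ∞) w2
  deriv_u : ∀ p : R2, pu f p =
    ((-1 - g1 p.1 ^ 2) * w1 p.1 / 2, (1 - g1 p.1 ^ 2) * w1 p.1 / 2, g1 p.1 * w1 p.1)
  deriv_v : ∀ p : R2, pv f p =
    ((1 + g2 p.2 ^ 2) * w2 p.2 / 2, (1 - g2 p.2 ^ 2) * w2 p.2 / 2, -(g2 p.2 * w2 p.2))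
  dense_immersion : Dense {p : R2 | Function.Injective (fderiv ℝ f p)}

/-- `Φ` is a germ of diffeomorphism at `p`. -/
def IsLocalDiffeoAt {E F : Type*} [NormedAddCommGroup E] [NormedSpace ℝ E]
    [NormedAddCommGroup F] [NormedSpace ℝ F] (Φ : E → F) (p : E) : Prop :=
  ∃ (U : Set E) (V : Set F) (Φinv : F → E),
    IsOpen U ∧ p ∈ U ∧ IsOpen V ∧ Φ p ∈ V ∧
    ContDiffOn ℝ (⊤ : ℕ∞) Φ U ∧ ContDiffOn ℝ (⊤ : ℕ∞) Φinv V ∧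
    Set.MapsTo Φ U V ∧ Set.MapsTo Φinv V U ∧
    (∀ x ∈ U, Φinv (Φ x) = x) ∧ (∀ y ∈ V, Φ (Φinv y) = y)

/-- 𝒜-equivalence of the germ of `f1` at `p1` and the germ of `f2` at `p2`. -/
def AEquiv (f1 : R2 → R3) (p1 : R2) (f2 : R2 → R3) (p2 : R2) : Prop :=
  ∃ (Φ : R2 → R2) (Ψ : R3 → R3),
    IsLocalDiffeoAt Φ p1 ∧ Φ p1 = p2 ∧
    IsLocalDiffeoAt Ψ (f1 p1) ∧ Ψ (f1 p1) = f2 p2 ∧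
    ∀ᶠ x in nhds p1, Ψ (f1 x) = f2 (Φ x)

/-- The canonical unit normal of a generalized timelike minimal surface. -/
def gtmsNormal (g1 g2 : ℝ → ℝ) (p : R2) : R3 :=
  (Real.sqrt ((1 - g1 p.1 * g2 p.2) ^ 2 + 2 * (g1 p.1 + g2 p.2) ^ 2))⁻¹ •
    (g1 p.1 + g2 p.2, -g1 p.1 + g2 p.2, 1 + g1 p.1 * g2 p.2)

/-- The signed area density function `λ = det(f_u, f_v, n)`. -/
def areaDensity (f : R2 → R3) (g1 g2 : ℝ → ℝ) (p : R2) : ℝ :=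
  det3 (pu f p) (pv f p) (gtmsNormal g1 g2 p)

/-- `f` is a front at `p`: the Legendrian lift `(f, n)` is an immersion at `p`,
where `n` is the canonical unit normal. -/
def IsFrontAt (f : R2 → R3) (g1 g2 : ℝ → ℝ) (p : R2) : Prop :=
  Function.Injective (fderiv ℝ (fun q => (f q, gtmsNormal g1 g2 q)) p)

/-- The differential of `f` at `p` has rank one. -/
def RankOne (f : R2 → R3) (p : R2) : Prop :=
  LinearMap.rank (fderiv ℝ f p).toLinearMap = 1

/-- Directional derivative of `F` along the vector field `X`. -/
def vD (X : R2 → R2) (F : R2 → R3) : R2 → R3 := fun q => fderiv ℝ F q (X q)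

/-- `φ_i = g_i' / (g_i² ω_i)`. -/
def phiW (g w : ℝ → ℝ) : ℝ → ℝ := fun t => deriv g t / (g t ^ 2 * w t)
/-- `Φ_i = (g_i/g_i') φ_i'`. -/
def PhiW (g w : ℝ → ℝ) : ℝ → ℝ := fun t => g t / deriv g t * deriv (phiW g w) t

/-- standard cuspidal butterfly -/
def fCBF : R2 → R3 := fun q =>
  (q.1, 5 * q.2 ^ 4 + 2 * q.1 * q.2, 4 * q.2 ^ 5 + q.1 * q.2 ^ 2 - q.1 ^ 2)
/-- standard cuspidal S₁⁺ singularity -/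
def fCS1p : R2 → R3 := fun q => (q.1, q.2 ^ 2, q.2 ^ 3 * (q.1 ^ 2 + q.2 ^ 2))
/-- standard cuspidal S₁⁻ singularity -/
def fCS1m : R2 → R3 := fun q => (q.1, q.2 ^ 2, q.2 ^ 3 * (q.1 ^ 2 - q.2 ^ 2))
/-- standard cuspidal edge -/
def fCE : R2 → R3 := fun q => (q.1, q.2 ^ 2, q.2 ^ 3)
/-- standard (2,5)-cuspidal edge -/
def fCE25 : R2 → R3 := fun q => (q.1, q.2 ^ 2, q.2 ^ 5)
/-- standard cuspidal beaks -/
def fCBK : R2 → R3 := fun q =>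
  (q.2, q.1 ^ 3 - q.1 * q.2 ^ 2, 3 * q.1 ^ 4 - 2 * q.1 ^ 2 * q.2 ^ 2)
/-- standard cuspidal lips -/
def fCLP : R2 → R3 := fun q =>
  (q.2, q.1 ^ 3 + q.1 * q.2 ^ 2, 3 * q.1 ^ 4 + 2 * q.1 ^ 2 * q.2 ^ 2)
/-- standard D₄⁺ singularity -/
def fD4p : R2 → R3 := fun q =>
  (q.1 * q.2, q.1 ^ 2 + 3 * q.2 ^ 2, q.1 ^ 2 * q.2 + q.2 ^ 3)
/-- standard D₄⁻ singularity -/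
def fD4m : R2 → R3 := fun q =>
  (q.1 * q.2, q.1 ^ 2 - 3 * q.2 ^ 2, q.1 ^ 2 * q.2 - q.2 ^ 3)

open MeasureTheory
open scoped ContDiff Topology

section ParametricIntegral

variable {W E E' : Type} [TopologicalSpace W] [MeasurableSpace W] [OpensMeasurableSpace W]
  [SecondCountableTopology W]
  [NormedAddCommGroup E] [NormedSpace ℝ E] [NormedAddCommGroup E'] [NormedSpace ℝ E']

/-- The integrals `∫ w, B w (K (A w y))`, with `K` smooth and `A`, `B` families of continuous
linear maps, are smooth in `y` when all formal derivatives are locally dominated. -/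
theorem contDiff_integral_clm (μ : Measure W) (A : W → E →L[ℝ] E') (hA : Continuous A) (n : ℕ) :
    ∀ (F F' : Type) [NormedAddCommGroup F] [NormedSpace ℝ F] [NormedAddCommGroup F']
      [NormedSpace ℝ F'] (K : E' → F) (B : W → F →L[ℝ] F'), ContDiff ℝ ∞ K → Continuous B →
      (∀ (j k : ℕ) (R : ℝ), ∃ bd : W → ℝ, Integrable bd μ ∧ ∀ᵐ w ∂μ, ∀ y, ‖y‖ ≤ R →
        ‖B w‖ * ‖A w‖ ^ k * ‖iteratedFDeriv ℝ j K (A w y)‖ ≤ bd w) →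
      ContDiff ℝ n (fun y => ∫ w, B w (K (A w y)) ∂μ) := by
  have key : ∀ (F F' : Type) [NormedAddCommGroup F] [NormedSpace ℝ F] [NormedAddCommGroup F']
      [NormedSpace ℝ F'] (K : E' → F) (B : W → F →L[ℝ] F'), ContDiff ℝ ∞ K → Continuous B →
      (∀ (j k : ℕ) (R : ℝ), ∃ bd : W → ℝ, Integrable bd μ ∧ ∀ᵐ w ∂μ, ∀ y, ‖y‖ ≤ R →
        ‖B w‖ * ‖A w‖ ^ k * ‖iteratedFDeriv ℝ j K (A w y)‖ ≤ bd w) →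
      ∃ B' : W → (E' →L[ℝ] F) →L[ℝ] (E →L[ℝ] F'), Continuous B' ∧
        (∀ w, ‖B' w‖ ≤ ‖B w‖ * ‖A w‖) ∧
        ∀ y, HasFDerivAt (fun y => ∫ w, B w (K (A w y)) ∂μ)
          (∫ w, B' w (fderiv ℝ K (A w y)) ∂μ) y := by
    intro F F' _ _ _ _ K B hK hB h
    let B' : W → (E' →L[ℝ] F) →L[ℝ] (E →L[ℝ] F') := fun w =>
      ((ContinuousLinearMap.compL ℝ E F F') (B w)).comp
        ((ContinuousLinearMap.compL ℝ E E' F).flip (A w))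
    have hB'c : Continuous B' :=
      ((ContinuousLinearMap.compL ℝ E F F').continuous.comp hB).clm_comp
        ((ContinuousLinearMap.compL ℝ E E' F).flip.continuous.comp hA)
    have hB'n : ∀ w, ‖B' w‖ ≤ ‖B w‖ * ‖A w‖ := by
      intro w
      refine ContinuousLinearMap.opNorm_le_bound _ (by positivity) fun T => ?_
      change ‖(B w).comp (T.comp (A w))‖ ≤ _
      calc ‖(B w).comp (T.comp (A w))‖ ≤ ‖B w‖ * ‖T.comp (A w)‖ :=
            ContinuousLinearMap.opNorm_comp_le _ _
        _ ≤ ‖B w‖ * (‖T‖ * ‖A w‖) := by gcongr; exact ContinuousLinearMap.opNorm_comp_le _ _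
        _ = _ := by ring
    refine ⟨B', hB'c, hB'n, fun y => ?_⟩
    have hKd : Differentiable ℝ K := hK.differentiable (by simp)
    have hK'c : Continuous (fderiv ℝ K) := hK.continuous_fderiv (by simp)
    have hFc : ∀ y, Continuous fun w => B w (K (A w y)) := fun y =>
      hB.clm_apply (hK.continuous.comp (hA.clm_apply continuous_const))
    have hF'c : ∀ y, Continuous fun w => B' w (fderiv ℝ K (A w y)) := fun y =>
      hB'c.clm_apply (hK'c.comp (hA.clm_apply continuous_const))
    obtain ⟨bd0, hbd0, hb0⟩ := h 0 0 ‖y‖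
    obtain ⟨bd1, hbd1, hb1⟩ := h 1 1 (‖y‖ + 1)
    refine hasFDerivAt_integral_of_dominated_of_fderiv_le (bound := bd1)
      (s := Metric.ball y 1) (F' := fun y w => B' w (fderiv ℝ K (A w y)))
      (Metric.ball_mem_nhds y one_pos)
      (Eventually.of_forall fun z => (hFc z).aestronglyMeasurable) ?_
      (hF'c y).aestronglyMeasurable ?_ hbd1 ?_
    · refine hbd0.mono' (hFc y).aestronglyMeasurable ?_
      filter_upwards [hb0] with w hw
      refine le_trans ((B w).le_opNorm _) ?_
      simpa using hw y le_rfl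
    · filter_upwards [hb1] with w hw
      intro z hz
      have hz' : ‖z‖ ≤ ‖y‖ + 1 := by
        have := norm_le_norm_add_norm_sub y z
        have h2 : dist z y < 1 := hz
        rw [dist_eq_norm, norm_sub_rev] at h2
        rw [norm_sub_rev] at this
        have h3 := norm_sub_norm_le z y
        rw [norm_sub_rev] at h3
        linarith
      refine le_trans ?_ (hw z hz')
      refine le_trans ((B' w).le_opNorm _) ?_
      rw [pow_one, norm_iteratedFDeriv_one]
      gcongr
      exact hB'n w
    · refine Eventually.of_forall fun w z _ => ?_
      have h1 := (hKd (A w z)).hasFDerivAt.comp z (A w).hasFDerivAt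
      exact (B w).hasFDerivAt.comp z h1
  induction n with
  | zero =>
    intro F F' _ _ _ _ K B hK hB h
    obtain ⟨B', -, -, hd⟩ := key F F' K B hK hB h
    exact contDiff_zero.2 (continuous_iff_continuousAt.2 fun y => (hd y).continuousAt)
  | succ n ih =>
    intro F F' _ _ _ _ K B hK hB h
    obtain ⟨B', hB'c, hB'n, hd⟩ := key F F' K B hK hB h
    refine contDiff_succ_iff_hasFDerivAt.2 ⟨_, ?_, hd⟩
    refine ih _ _ _ B' (hK.fderiv_right (m := ∞) (by simp)) hB'c fun j k R => ?_
    obtain ⟨bd, hbd, hb⟩ := h (j + 1) (k + 1) R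
    refine ⟨bd, hbd, ?_⟩
    filter_upwards [hb] with w hw
    intro y hy
    refine le_trans ?_ (hw y hy)
    rw [norm_iteratedFDeriv_fderiv]
    calc _ ≤ ‖B w‖ * ‖A w‖ * ‖A w‖ ^ k * ‖iteratedFDeriv ℝ (j + 1) K (A w y)‖ := by
            gcongr; exact hB'n w
      _ = _ := by ring

end ParametricIntegral

section Hadamard

variable {Q F : Type} [NormedAddCommGroup Q] [NormedSpace ℝ Q] [FiniteDimensional ℝ Q]
  [NormedAddCommGroup F] [NormedSpace ℝ F] [CompleteSpace F]

/-- Hadamard's lemma with parameters. -/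
theorem exists_hadamard_quotient {g : ℝ × Q → F} (hg : ContDiff ℝ ∞ g) :
    ∃ k : ℝ × Q → F, ContDiff ℝ ∞ k ∧ (∀ s q, g (s, q) = g (0, q) + s • k (s, q)) ∧
      ∀ q, k (0, q) = fderiv ℝ g (0, q) (1, 0) := by
  have hg' : ContDiff ℝ ∞ (fderiv ℝ g) := hg.fderiv_right (by simp)
  let A : ℝ → (ℝ × Q) →L[ℝ] (ℝ × Q) := fun τ =>
    τ • (ContinuousLinearMap.fst ℝ ℝ Q).prod 0 +
      ContinuousLinearMap.prod 0 (ContinuousLinearMap.snd ℝ ℝ Q)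
  have hA : Continuous A := by fun_prop
  have hAv : ∀ τ s q, A τ (s, q) = (τ * s, q) := fun τ s q => by simp [A]
  have hAy : ∀ τ ∈ Set.Icc (0 : ℝ) 1, ∀ y, ‖A τ y‖ ≤ 1 * ‖y‖ := by
    rintro τ hτ ⟨s, q⟩
    rw [one_mul, hAv]
    refine max_le ?_ (le_max_right _ _)
    change ‖τ * s‖ ≤ _
    rw [norm_mul, Real.norm_of_nonneg hτ.1]
    exact (mul_le_of_le_one_left (norm_nonneg _) hτ.2).trans (le_max_left _ _)
  have hAn : ∀ τ ∈ Set.Icc (0 : ℝ) 1, ‖A τ‖ ≤ 1 := fun τ hτ =>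
    ContinuousLinearMap.opNorm_le_bound _ zero_le_one (hAy τ hτ)
  let B : ((ℝ × Q) →L[ℝ] F) →L[ℝ] F := ContinuousLinearMap.apply ℝ F ((1 : ℝ), (0 : Q))
  let μ : Measure ℝ := volume.restrict (Set.Icc 0 1)
  have hk : ContDiff ℝ ∞ fun y => ∫ τ, B (fderiv ℝ g (A τ y)) ∂μ := by
    refine contDiff_infty.2 fun n => ?_
    refine contDiff_integral_clm μ A hA n _ _ (fderiv ℝ g) (fun _ => B) hg' continuous_const ?_
    intro j k R
    have hc : Continuous (iteratedFDeriv ℝ j (fderiv ℝ g)) :=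
      hg'.continuous_iteratedFDeriv (by exact_mod_cast le_top)
    obtain ⟨M, hM⟩ := (isCompact_closedBall (0 : ℝ × Q) R).exists_bound_of_continuousOn
      hc.continuousOn
    refine ⟨fun _ => ‖B‖ * 1 ^ k * M, integrable_const _, ?_⟩
    filter_upwards [ae_restrict_mem measurableSet_Icc] with τ hτ
    intro y hy
    have hm := hM (A τ y) (by
      rw [mem_closedBall_zero_iff]
      exact (hAy τ hτ y).trans (by linarith))
    gcongr
    exact hAn τ hτ
  refine ⟨_, hk, fun s q => ?_, fun q => ?_⟩
  · have hd : ∀ τ : ℝ, HasDerivAt (fun τ : ℝ => g (τ * s, q))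
        (s • B (fderiv ℝ g (A τ (s, q)))) τ := by
      intro τ
      have h1 : HasDerivAt (fun τ : ℝ => (τ * s, q)) (s, (0 : Q)) τ := by
        simpa using ((hasDerivAt_id τ).mul_const s).prodMk (hasDerivAt_const τ q)
      have h2 := ((hg.differentiable (by simp)) (τ * s, q)).hasFDerivAt.comp_hasDerivAt τ h1
      have h3 : ((s, 0) : ℝ × Q) = s • ((1 : ℝ), (0 : Q)) := by simp
      rw [h3, map_smul, ← hAv] at h2
      exact h2
    have hcont : Continuous fun τ => s • B (fderiv ℝ g (A τ (s, q))) :=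
      (B.continuous.comp (hg'.continuous.comp (hA.clm_apply continuous_const))).const_smul s
    have h4 := intervalIntegral.integral_eq_sub_of_hasDerivAt (fun τ _ => hd τ)
      (hcont.intervalIntegrable 0 1)
    rw [intervalIntegral.integral_of_le zero_le_one, integral_smul,
      ← integral_Icc_eq_integral_Ioc] at h4
    simp only [one_mul, zero_mul] at h4
    rw [h4]
    abel
  · have h5 : ∀ τ, A τ ((0 : ℝ), q) = (0, q) := fun τ => by simp [hAv]
    simp [h5, μ, B]

end Hadamard

section CosSqrt

/-- The entire function `c` with `c (y ^ 2) = cos y`. -/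
def cosSqrtSeries (y : ℝ) : ℝ :=
  FormalMultilinearSeries.ofScalarsSum (E := ℝ) (fun n : ℕ => (-1 : ℝ) ^ n / (2 * n).factorial) y

theorem contDiff_cosSqrtSeries : ContDiff ℝ ∞ cosSqrtSeries := by
  set a : ℕ → ℝ := fun n => (-1 : ℝ) ^ n / (2 * n).factorial with ha
  have hne : ∀ n, a n ≠ 0 := fun n => by positivity
  have hr : (FormalMultilinearSeries.ofScalars ℝ a).radius = ⊤ := by
    refine FormalMultilinearSeries.ofScalars_radius_eq_top_of_tendsto ℝ a (.of_forall hne) ?_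
    have hle : ∀ n : ℕ, ‖a n.succ‖ / ‖a n‖ ≤ 1 / ((n : ℝ) + 1) := fun n => by
      have h1 : ((2 * n.succ).factorial : ℝ) = (2 * n + 2) * ((2 * n + 1) * (2 * n).factorial) := by
        rw [show 2 * n.succ = (2 * n + 1) + 1 by omega, Nat.factorial_succ, Nat.factorial_succ]
        push_cast; ring
      have h2 : (0 : ℝ) < (2 * n).factorial := by positivity
      simp only [ha, norm_div, norm_pow, norm_neg, norm_one, one_pow, h1]
      rw [Real.norm_of_nonneg (by positivity), Real.norm_of_nonneg (by positivity),
        div_div_eq_mul_div, div_le_div_iff₀ (by positivity) (by positivity)]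
      field_simp
      nlinarith [(Nat.cast_nonneg n : (0 : ℝ) ≤ n)]
    exact squeeze_zero (fun n => by positivity) hle tendsto_one_div_add_atTop_nhds_zero_nat
  have h := (FormalMultilinearSeries.ofScalars ℝ a).hasFPowerSeriesOnBall (by rw [hr]; simp)
  rw [hr] at h
  have h' : AnalyticOnNhd ℝ cosSqrtSeries Set.univ := by
    have := h.analyticOnNhd
    simpa using! this
  exact h'.contDiff.of_le le_top

theorem cosSqrtSeries_sq (y : ℝ) : cosSqrtSeries (y ^ 2) = cos y := by
  rw [cosSqrtSeries, FormalMultilinearSeries.ofScalars_sum_eq, Real.cos_eq_tsum]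
  refine tsum_congr fun n => ?_
  rw [smul_eq_mul, ← pow_mul]
  ring

theorem cosSqrtSeries_of_pos {y : ℝ} (hy : 0 < y) : cosSqrtSeries y = cos √y := by
  rw [← cosSqrtSeries_sq, Real.sq_sqrt hy.le]

theorem deriv_cosSqrtSeries {y : ℝ} (hy : 0 < y) :
    deriv cosSqrtSeries y = -sin √y / (2 * √y) := by
  have h : cosSqrtSeries =ᶠ[𝓝 y] fun y => cos √y :=
    (eventually_gt_nhds hy).mono fun z hz => cosSqrtSeries_of_pos hz
  rw [h.deriv_eq, (((Real.hasDerivAt_sqrt hy.ne')).cos).deriv]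
  ring

theorem cosSqrtSeries_ode {y : ℝ} (hy : 0 < y) :
    4 * y * deriv (deriv cosSqrtSeries) y + 2 * deriv cosSqrtSeries y + cosSqrtSeries y = 0 := by
  have h : deriv cosSqrtSeries =ᶠ[𝓝 y] fun y => -sin √y / (2 * √y) :=
    (eventually_gt_nhds hy).mono fun z hz => deriv_cosSqrtSeries hz
  have hs : 0 < √y := Real.sqrt_pos.2 hy
  have hd := Real.hasDerivAt_sqrt hy.ne'
  have h2 := (hd.sin.fun_neg.fun_div (hd.const_mul 2) (by positivity)).deriv
  rw [h.deriv_eq, h2, deriv_cosSqrtSeries hy, cosSqrtSeries_of_pos hy]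
  have hy2 : y = √y ^ 2 := (Real.sq_sqrt hy.le).symm
  set r := √y
  rw [hy2]
  field_simp
  ring

theorem iteratedDeriv_cosSqrtSeries_ode (n : ℕ) : ∀ {y : ℝ}, 0 < y →
    4 * y * iteratedDeriv (n + 2) cosSqrtSeries y +
      (4 * n + 2) * iteratedDeriv (n + 1) cosSqrtSeries y +
        iteratedDeriv n cosSqrtSeries y = 0 := by
  have hd : ∀ m (y : ℝ), HasDerivAt (iteratedDeriv m cosSqrtSeries)
      (iteratedDeriv (m + 1) cosSqrtSeries y) y := fun m y => by
    rw [iteratedDeriv_succ]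
    exact (contDiff_cosSqrtSeries.differentiable_iteratedDeriv m 
      (by exact_mod_cast ENat.natCast_lt_top m) y).hasDerivAt
  induction n with
  | zero =>
    intro y hy
    simpa [iteratedDeriv_succ] using! cosSqrtSeries_ode hy
  | succ n ih =>
    intro y hy
    have hev : (fun y => 4 * y * iteratedDeriv (n + 2) cosSqrtSeries y +
        (4 * n + 2) * iteratedDeriv (n + 1) cosSqrtSeries y + iteratedDeriv n cosSqrtSeries y)
          =ᶠ[𝓝 y] fun _ => (0 : ℝ) := (eventually_gt_nhds hy).mono fun z hz => ih hz
    have h0 := hev.deriv_eq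
    rw [((((hasDerivAt_id' y).const_mul 4).fun_mul (hd (n + 2) y)).fun_add
      ((hd (n + 1) y).const_mul (4 * (n : ℝ) + 2)) |>.fun_add (hd n y)).deriv, deriv_const] at h0
    push_cast
    linear_combination h0

theorem iteratedDeriv_cosSqrtSeries_bounded (n : ℕ) : ∃ C : ℝ, ∀ y : ℝ, 1 ≤ y →
    |iteratedDeriv n cosSqrtSeries y| ≤ C := by
  suffices h : (∃ C : ℝ, ∀ y : ℝ, 1 ≤ y → |iteratedDeriv n cosSqrtSeries y| ≤ C) ∧
    ∃ C : ℝ, ∀ y : ℝ, 1 ≤ y → |iteratedDeriv (n + 1) cosSqrtSeries y| ≤ C from h.1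
  induction n with
  | zero =>
    refine ⟨⟨1, fun y hy => ?_⟩, 1, fun y hy => ?_⟩
    · rw [iteratedDeriv_zero, cosSqrtSeries_of_pos (by linarith)]
      exact Real.abs_cos_le_one _
    · have hs : 1 ≤ √y := Real.one_le_sqrt.2 hy
      rw [iteratedDeriv_one, deriv_cosSqrtSeries (by linarith), abs_div, abs_neg,
        abs_of_pos (by linarith : 0 < 2 * √y), div_le_one (by linarith)]
      linarith [Real.abs_sin_le_one √y]
  | succ n ih =>
    refine ⟨ih.2, ?_⟩
    obtain ⟨⟨C, hC⟩, C', hC'⟩ := ih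
    refine ⟨(4 * n + 2) * C' + C, fun y hy => ?_⟩
    have h := iteratedDeriv_cosSqrtSeries_ode n (by linarith : 0 < y)
    set a := iteratedDeriv (n + 2) cosSqrtSeries y with ha
    have h1 : |a| ≤ |4 * y * a| := by
      rw [abs_mul, abs_of_pos (by linarith : 0 < 4 * y)]
      nlinarith [abs_nonneg a]
    have h2 : 4 * y * a = -((4 * n + 2) * iteratedDeriv (n + 1) cosSqrtSeries y)
      - iteratedDeriv n cosSqrtSeries y := by linarith
    refine h1.trans ?_
    rw [h2]
    refine (abs_sub _ _).trans ?_
    rw [abs_neg, abs_mul, abs_of_pos (by positivity : (0 : ℝ) < 4 * n + 2)]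
    have := mul_le_mul_of_nonneg_left (hC' y hy) (by positivity : (0 : ℝ) ≤ 4 * n + 2)
    linarith [hC y hy]

/-- A function of temperate growth `c` with `c (y ^ 2) = cos y`. -/
theorem exists_hasTemperateGrowth_cos_sqrt :
    ∃ c : ℝ → ℝ, c.HasTemperateGrowth ∧ ∀ y, c (y ^ 2) = cos y := by
  let c : ℝ → ℝ := fun y => Real.smoothTransition (y + 2) * cosSqrtSeries y
  have hc : ContDiff ℝ ∞ c :=
    (Real.smoothTransition.contDiff.comp (contDiff_id.add contDiff_const)).mul
      contDiff_cosSqrtSeries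
  refine ⟨c, ⟨hc, fun n => ?_⟩, fun y => ?_⟩
  · obtain ⟨C1, h1⟩ := iteratedDeriv_cosSqrtSeries_bounded n
    have hcont : Continuous (iteratedDeriv n c) :=
      hc.continuous_iteratedDeriv n (by exact_mod_cast le_top)
    obtain ⟨C2, h2⟩ := (isCompact_Icc (a := (-3 : ℝ)) (b := 2)).exists_bound_of_continuousOn
      hcont.continuousOn
    refine ⟨0, max 0 (max C1 C2), fun y => ?_⟩
    rw [pow_zero, mul_one, norm_iteratedFDeriv_eq_norm_iteratedDeriv]
    rcases lt_or_ge y (-2) with hy | hy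
    · have : c =ᶠ[𝓝 y] fun _ => (0 : ℝ) := (eventually_lt_nhds hy).mono fun z hz => by
        simp [c, Real.smoothTransition.zero_of_nonpos (by linarith : z + 2 ≤ 0)]
      rw [this.iteratedDeriv_eq]
      simp
    rcases le_or_gt y 1 with hy' | hy'
    · exact (h2 y ⟨by linarith, by linarith⟩).trans (by simp)
    · have : c =ᶠ[𝓝 y] cosSqrtSeries := (eventually_gt_nhds hy').mono fun z hz => by
        simp [c, Real.smoothTransition.one_of_one_le (by linarith : 1 ≤ z + 2)]
      rw [this.iteratedDeriv_eq]
      exact (h1 y hy'.le).trans (by simp)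
  · simp only [c]
    rw [Real.smoothTransition.one_of_one_le (by nlinarith [sq_nonneg y]), one_mul, cosSqrtSeries_sq]

end CosSqrt

section Whitney

open FourierTransform

theorem integrable_one_add_norm_pow_mul_schwartz
    {V : Type} [NormedAddCommGroup V] [InnerProductSpace ℝ V] [FiniteDimensional ℝ V]
    [MeasurableSpace V] [BorelSpace V] (φ : SchwartzMap V ℂ) (N : ℕ) :
    Integrable (fun w => ‖φ w‖ * (1 + ‖w‖) ^ N) volume := by
  have h : Integrable (fun w => 2 ^ N * (‖w‖ ^ 0 * ‖φ w‖ + ‖w‖ ^ N * ‖φ w‖)) volume :=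
    ((φ.integrable_pow_mul volume 0).add (φ.integrable_pow_mul volume N)).const_mul _
  refine h.mono' (by fun_prop) (.of_forall fun w => ?_)
  rw [Real.norm_of_nonneg (by positivity), pow_zero, one_mul]
  have hle : (1 + ‖w‖) ^ N ≤ 2 ^ N * (1 + ‖w‖ ^ N) := by
    rcases le_total ‖w‖ 1 with h1 | h1
    · calc (1 + ‖w‖) ^ N ≤ 2 ^ N := by gcongr; linarith
        _ ≤ 2 ^ N * (1 + ‖w‖ ^ N) := le_mul_of_one_le_right (by positivity) (by simp)
    · calc (1 + ‖w‖) ^ N ≤ (2 * ‖w‖) ^ N := by gcongr; linarith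
        _ = 2 ^ N * ‖w‖ ^ N := mul_pow _ _ _
        _ ≤ 2 ^ N * (1 + ‖w‖ ^ N) := by gcongr; simp
  nlinarith [norm_nonneg (φ w)]

theorem hasTemperateGrowth_exp_mul_I :
    Function.HasTemperateGrowth fun t : ℝ => Complex.exp (t * Complex.I) := by
  have hd : ∀ t : ℝ, HasDerivAt (fun t : ℝ => Complex.exp (t * Complex.I))
      (Complex.I * Complex.exp (t * Complex.I)) t := fun t => by
    have := ((Complex.ofRealCLM.hasDerivAt (x := t)).mul_const Complex.I).cexp
    simpa [mul_comm] using! this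
  have hi : ∀ n : ℕ, iteratedDeriv n (fun t : ℝ => Complex.exp (t * Complex.I)) =
      fun t : ℝ => Complex.I ^ n * Complex.exp (t * Complex.I) := fun n => by
    induction n with
    | zero => simp
    | succ n ih =>
      rw [iteratedDeriv_succ, ih]
      ext t
      rw [((hd t).const_mul (Complex.I ^ n)).deriv]
      ring
  refine ⟨(Complex.ofRealCLM.contDiff.mul contDiff_const).cexp, fun n => ⟨0, 1, fun t => ?_⟩⟩
  rw [norm_iteratedFDeriv_eq_norm_iteratedDeriv, hi]
  simp [Complex.norm_exp_ofReal_mul_I]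

/-- The even part of a smooth compactly supported function is smooth in the square of the
variable. -/
theorem exists_even_part_of_hasCompactSupport {g : ℝ × ℝ × ℝ → ℝ} (hg : ContDiff ℝ ∞ g)
    (hc : HasCompactSupport g) : ∃ h : ℝ × ℝ × ℝ → ℝ, ContDiff ℝ ∞ h ∧
      ∀ s q, h (s ^ 2, q) = (g (s, q) + g (-s, q)) / 2 := by
  obtain ⟨c, hct, hcc⟩ := exists_hasTemperateGrowth_cos_sqrt
  let π' : EuclideanSpace ℝ (Fin 3) →L[ℝ] ℝ × ℝ × ℝ := (EuclideanSpace.proj 0).prod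
    ((EuclideanSpace.proj 1).prod (EuclideanSpace.proj 2))
  let e : EuclideanSpace ℝ (Fin 3) ≃L[ℝ] ℝ × ℝ × ℝ := LinearEquiv.toContinuousLinearEquiv
    { (π' : EuclideanSpace ℝ (Fin 3) →ₗ[ℝ] ℝ × ℝ × ℝ) with
      invFun := fun x => !₂[x.1, x.2.1, x.2.2]
      left_inv := fun x => by ext i; fin_cases i <;> simp [π']
      right_inv := fun x => by simp [π'] }
  have he : ∀ x, e.symm x = !₂[x.1, x.2.1, x.2.2] := fun x => rfl
  let G : EuclideanSpace ℝ (Fin 3) → ℂ := fun x => (g (e x) : ℂ)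
  have hGs : ContDiff ℝ ∞ G := Complex.ofRealCLM.contDiff.comp (hg.comp e.contDiff)
  have hGc : HasCompactSupport G :=
    (hc.comp_homeomorph e.toHomeomorph).comp_left (g := ((↑) : ℝ → ℂ)) (by simp)
  let S : SchwartzMap (EuclideanSpace ℝ (Fin 3)) ℂ := hGc.toSchwartzMap hGs
  let φ : SchwartzMap (EuclideanSpace ℝ (Fin 3)) ℂ := 𝓕 S
  have hinv : ∀ x, (g x : ℂ) = ∫ w : EuclideanSpace ℝ (Fin 3), Complex.exp
      ((2 * π * (x.1 * w 0 + x.2.1 * w 1 + x.2.2 * w 2) : ℝ) * Complex.I) * φ w := fun x => by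
    have h1 : (𝓕⁻ φ) (e.symm x) = S (e.symm x) := by
      rw [FourierTransform.fourierInv_fourier_eq]
    rw [SchwartzMap.fourierInv_coe, Real.fourierInv_eq'] at h1
    have h2 : S (e.symm x) = g x := by
      simp [S, G]
    rw [← h2, ← h1]
    refine integral_congr_ae (.of_forall fun w => ?_)
    simp only [he, PiLp.inner_apply, Fin.sum_univ_three, smul_eq_mul]
    simp
  let K : ℝ × ℝ → ℂ := fun z => (c z.1 : ℂ) * Complex.exp (z.2 * Complex.I)
  have hK : K.HasTemperateGrowth := by
    have h1 := (Function.Complex.hasTemperateGrowth_ofReal.comp hct).comp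
      (ContinuousLinearMap.fst ℝ ℝ ℝ).hasTemperateGrowth
    have h2 := hasTemperateGrowth_exp_mul_I.comp (ContinuousLinearMap.snd ℝ ℝ ℝ).hasTemperateGrowth
    exact h1.mul h2
  let A : EuclideanSpace ℝ (Fin 3) → (ℝ × ℝ × ℝ) →L[ℝ] ℝ × ℝ := fun w =>
    (2 * π * w 0) ^ 2 • (ContinuousLinearMap.fst ℝ ℝ (ℝ × ℝ)).prod 0 +
      (2 * π * w 1) • ContinuousLinearMap.prod 0
        (ContinuousLinearMap.fst ℝ ℝ ℝ ∘L ContinuousLinearMap.snd ℝ ℝ (ℝ × ℝ)) +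
      (2 * π * w 2) • ContinuousLinearMap.prod 0
        (ContinuousLinearMap.snd ℝ ℝ ℝ ∘L ContinuousLinearMap.snd ℝ ℝ (ℝ × ℝ))
  have hA : Continuous A := by fun_prop
  have hAv : ∀ w x, A w x = ((2 * π * w 0) ^ 2 * x.1, 2 * π * (x.2.1 * w 1 + x.2.2 * w 2)) :=
    fun w x => by simp [A]; ring
  have hπ := Real.pi_pos
  have hAn : ∀ w, ‖A w‖ ≤ (2 * π + 2) ^ 2 * (1 + ‖w‖) ^ 2 := fun w => by
    refine ContinuousLinearMap.opNorm_le_bound _ (by positivity) fun x => ?_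
    rw [hAv]
    have hw : ∀ i, |w i| ≤ ‖w‖ := fun i => PiLp.norm_apply_le w i
    have hx1 : |x.1| ≤ ‖x‖ := le_max_left _ _
    have hx2 : |x.2.1| ≤ ‖x‖ := (le_max_left _ _).trans (le_max_right _ _)
    have hx3 : |x.2.2| ≤ ‖x‖ := (le_max_right _ _).trans (le_max_right _ _)
    have hw0 := norm_nonneg w
    have hx0 := norm_nonneg x
    refine max_le ?_ ?_
    · simp only [Real.norm_eq_abs, abs_mul, abs_pow, abs_two, abs_of_pos hπ]
      have : (2 * π * |w 0|) ^ 2 ≤ (2 * π + 2) ^ 2 * (1 + ‖w‖) ^ 2 := by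
        rw [← mul_pow]
        gcongr
        · linarith
        · linarith [hw 0]
      gcongr
    · simp only [Real.norm_eq_abs, abs_mul, abs_two, abs_of_pos hπ]
      have h1 : |x.2.1 * w 1 + x.2.2 * w 2| ≤ 2 * ‖w‖ * ‖x‖ := by
        refine (abs_add_le _ _).trans ?_
        rw [abs_mul, abs_mul]
        have := mul_le_mul hx2 (hw 1) (abs_nonneg _) hx0
        have := mul_le_mul hx3 (hw 2) (abs_nonneg _) hx0
        linarith
      calc 2 * π * |x.2.1 * w 1 + x.2.2 * w 2| ≤ 2 * π * (2 * ‖w‖ * ‖x‖) := by gcongr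
        _ = (4 * π * ‖w‖) * ‖x‖ := by ring
        _ ≤ ((2 * π + 2) ^ 2 * (1 + ‖w‖) ^ 2) * ‖x‖ := by
          have h2 : 4 * π ≤ (2 * π + 2) ^ 2 := by nlinarith
          have h3 : ‖w‖ ≤ (1 + ‖w‖) ^ 2 := by nlinarith
          exact mul_le_mul_of_nonneg_right (mul_le_mul h2 h3 hw0 (by positivity)) hx0
  let B : EuclideanSpace ℝ (Fin 3) → ℂ →L[ℝ] ℂ := fun w => ContinuousLinearMap.mul ℝ ℂ (φ w)
  have hB : Continuous B := (ContinuousLinearMap.mul ℝ ℂ).continuous.comp φ.continuous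
  have hBn : ∀ w, ‖B w‖ ≤ ‖φ w‖ := fun w => ContinuousLinearMap.opNorm_mul_apply_le ℝ ℂ _
  let H : ℝ × ℝ × ℝ → ℂ := fun y => ∫ w, B w (K (A w y)) ∂volume
  have hH : ContDiff ℝ ∞ H := by
    refine contDiff_infty.2 fun n => ?_
    refine contDiff_integral_clm volume A hA n _ _ K B hK.1 hB fun j k R => ?_
    obtain ⟨m, C, hC, hm⟩ := hK.norm_iteratedFDeriv_le_uniform j
    set D : ℝ := (2 * π + 2) ^ 2 with hD
    refine ⟨fun w => (D ^ k * (C * (1 + D * |R|) ^ m)) * (‖φ w‖ * (1 + ‖w‖) ^ (2 * k + 2 * m)),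
      (integrable_one_add_norm_pow_mul_schwartz φ _).const_mul _, .of_forall fun w y hy => ?_⟩
    have h0 : 0 ≤ ‖w‖ := norm_nonneg w
    have h1 : 1 + ‖A w y‖ ≤ (1 + D * |R|) * (1 + ‖w‖) ^ 2 := by
      have h2 : ‖A w y‖ ≤ D * (1 + ‖w‖) ^ 2 * |R| :=
        ((A w).le_opNorm y).trans (mul_le_mul (hAn w) (hy.trans (le_abs_self R))
          (norm_nonneg _) (by positivity))
      have h3 : 1 ≤ (1 + ‖w‖) ^ 2 := by nlinarith
      nlinarith
    calc ‖B w‖ * ‖A w‖ ^ k * ‖iteratedFDeriv ℝ j K (A w y)‖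
        ≤ ‖φ w‖ * (D * (1 + ‖w‖) ^ 2) ^ k * (C * ((1 + D * |R|) * (1 + ‖w‖) ^ 2) ^ m) := by
          refine mul_le_mul (mul_le_mul (hBn w) ?_ (by positivity) (norm_nonneg _)) ?_
            (norm_nonneg _) (by positivity)
          · exact pow_le_pow_left₀ (norm_nonneg _) (hAn w) k
          · exact (hm j le_rfl _).trans (by gcongr)
      _ = _ := by
        clear_value D
        simp only [mul_pow, ← pow_mul, pow_add]
        ring
  refine ⟨fun y => (H y).re, Complex.reCLM.contDiff.comp hH, fun s q => ?_⟩
  have hintegrable : ∀ x : ℝ × ℝ × ℝ, Integrable (fun w : EuclideanSpace ℝ (Fin 3) => Complex.exp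
      ((2 * π * (x.1 * w 0 + x.2.1 * w 1 + x.2.2 * w 2) : ℝ) * Complex.I) * φ w) volume := by
    intro x
    refine φ.integrable.mono (by fun_prop) (.of_forall fun w => ?_)
    rw [norm_mul, Complex.norm_exp_ofReal_mul_I, one_mul]
  have hHv : H (s ^ 2, q) = (((g (s, q) + g (-s, q)) / 2 : ℝ) : ℂ) := by
    push_cast
    rw [hinv, hinv, ← integral_add (hintegrable _) (hintegrable _), ← integral_div]
    refine integral_congr_ae (.of_forall fun w => ?_)
    simp only [B, K, hAv, ContinuousLinearMap.mul_apply']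
    rw [← mul_pow, hcc, Complex.ofReal_cos, Complex.cos]
    set θ : ℝ := 2 * π * (q.1 * w 1 + q.2 * w 2)
    have e1 : ((2 * π * (s * w 0 + q.1 * w 1 + q.2 * w 2) : ℝ) : ℂ) * Complex.I =
        ((2 * π * w 0 * s : ℝ) : ℂ) * Complex.I + (θ : ℂ) * Complex.I := by
      simp only [θ]; push_cast; ring
    have e2 : ((2 * π * (-s * w 0 + q.1 * w 1 + q.2 * w 2) : ℝ) : ℂ) * Complex.I =
        -((2 * π * w 0 * s : ℝ) : ℂ) * Complex.I + (θ : ℂ) * Complex.I := by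
      simp only [θ]; push_cast; ring
    rw [e1, e2, Complex.exp_add, Complex.exp_add]
    ring
  simp only [hHv, Complex.ofReal_re]

/-- Whitney's theorem: near the origin a smooth function splits into an even and an odd part,
both smooth in the square of the first variable. -/
theorem exists_whitney_even_odd {g : ℝ × ℝ × ℝ → ℝ} (hg : ContDiff ℝ ∞ g) :
    ∃ h k : ℝ × ℝ × ℝ → ℝ, ContDiff ℝ ∞ h ∧ ContDiff ℝ ∞ k ∧
      ∀ᶠ x in 𝓝 (0 : ℝ × ℝ × ℝ), g x = h (x.1 ^ 2, x.2) + x.1 * k (x.1 ^ 2, x.2) := by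
  have key : ∀ g : ℝ × ℝ × ℝ → ℝ, ContDiff ℝ ∞ g → ∃ h : ℝ × ℝ × ℝ → ℝ, ContDiff ℝ ∞ h ∧
      ∀ᶠ x in 𝓝 (0 : ℝ × ℝ × ℝ), h (x.1 ^ 2, x.2) = (g x + g (-x.1, x.2)) / 2 := by
    intro g hg
    let χ : ContDiffBump (0 : ℝ × ℝ × ℝ) := ⟨1, 2, one_pos, one_lt_two⟩
    obtain ⟨h, hh, hh'⟩ := exists_even_part_of_hasCompactSupport (χ.contDiff.mul hg)
      (χ.hasCompactSupport.mul_right)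
    refine ⟨h, hh, ?_⟩
    have h1 : ∀ᶠ x in 𝓝 (0 : ℝ × ℝ × ℝ), χ x = 1 := χ.eventuallyEq_one
    have ht : Tendsto (fun x : ℝ × ℝ × ℝ => (-x.1, x.2)) (𝓝 0) (𝓝 0) := by
      have : Continuous fun x : ℝ × ℝ × ℝ => (-x.1, x.2) := by fun_prop
      simpa using! this.tendsto 0
    filter_upwards [h1, ht.eventually h1] with x hx hx'
    have := hh' x.1 x.2
    rw [this]
    simp [hx, hx']
  obtain ⟨h, hh, hh'⟩ := key g hg
  have hd : ContDiff ℝ ∞ fun x : ℝ × ℝ × ℝ => g x - g (-x.1, x.2) := by fun_prop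
  obtain ⟨k, hk, hk', -⟩ := exists_hadamard_quotient hd
  obtain ⟨l, hl, hl'⟩ := key k hk
  refine ⟨h, fun x => l x / 2, hh, hl.div_const 2, ?_⟩
  have hkk : ∀ s q, s ≠ 0 → k (-s, q) = k (s, q) := fun s q hs => by
    have e1 := hk' s q
    have e2 := hk' (-s) q
    simp only [neg_zero, sub_self, zero_add, neg_neg, smul_eq_mul] at e1 e2
    have : s * (k (-s, q) - k (s, q)) = 0 := by linarith
    linarith [(mul_eq_zero.1 this).resolve_left hs]
  filter_upwards [hh', hl'] with ⟨s, q⟩ e1 e2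
  simp only at e1 e2 ⊢
  have e3 := hk' s q
  simp only [neg_zero, sub_self, zero_add, smul_eq_mul] at e3
  rcases eq_or_ne s 0 with rfl | hs
  · simp at e1 ⊢; linarith
  · rw [e1, e2, hkk s q hs]
    linarith

end Whitney

section LocalTools

variable {E F : Type} [NormedAddCommGroup E] [NormedSpace ℝ E]
  [NormedAddCommGroup F] [NormedSpace ℝ F]

/-- A germ of a smooth map has a globally smooth representative. -/
theorem exists_contDiff_eventuallyEq [FiniteDimensional ℝ E] {f : E → F} {p : E} {U : Set E}
    (hU : U ∈ 𝓝 p) (hf : ContDiffOn ℝ ∞ f U) : ∃ g : E → F, ContDiff ℝ ∞ g ∧ g =ᶠ[𝓝 p] f := by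
  obtain ⟨ε, hε, hεU⟩ := Metric.mem_nhds_iff.1 hU
  let χ : ContDiffBump p := ⟨ε / 4, ε / 2, by positivity, by linarith⟩
  refine ⟨fun x => χ x • f x, ?_, ?_⟩
  · refine contDiff_iff_contDiffAt.2 fun x => ?_
    by_cases hx : x ∈ Metric.ball p ε
    · exact χ.contDiffAt.smul
        ((hf.mono hεU).contDiffAt (Metric.isOpen_ball.mem_nhds hx))
    · have hx' : x ∉ tsupport χ := fun h => hx <| by
        rw [χ.tsupport_eq] at h
        exact Metric.closedBall_subset_ball (by change ε / 2 < ε; linarith) h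
      have : (fun x => χ x • f x) =ᶠ[𝓝 x] fun _ => 0 := by
        filter_upwards [notMem_tsupport_iff_eventuallyEq.1 hx'] with y hy
        simp [hy]
      exact contDiffAt_const.congr_of_eventuallyEq this
  · filter_upwards [χ.eventuallyEq_one] with x hx
    simp [hx]

/-- Inverse function theorem with a globally defined smooth representative of the inverse. -/
theorem exists_local_inverse [FiniteDimensional ℝ E] [FiniteDimensional ℝ F]
    {f : E → F} {p : E} (hf : ContDiff ℝ ∞ f) {e : E ≃L[ℝ] F}
    (he : HasFDerivAt f (e : E →L[ℝ] F) p) : ∃ g : F → E, ContDiff ℝ ∞ g ∧ g (f p) = p ∧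
      (∀ᶠ x in 𝓝 p, g (f x) = x) ∧ ∀ᶠ y in 𝓝 (f p), f (g y) = y := by
  have : CompleteSpace E := FiniteDimensional.complete ℝ E
  have hn : (∞ : WithTop ℕ∞) ≠ 0 := by simp
  let o := hf.contDiffAt.toOpenPartialHomeomorph f he hn
  have hop : p ∈ o.source := hf.contDiffAt.mem_toOpenPartialHomeomorph_source he hn
  have hofp : f p ∈ o.target := hf.contDiffAt.image_mem_toOpenPartialHomeomorph_target he hn
  have hsymm : ContDiffAt ℝ ∞ o.symm (f p) := hf.contDiffAt.to_localInverse he hn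
  have hev : ∀ᶠ y in 𝓝 (f p), ContDiffAt ℝ ∞ o.symm y := by
    have h1 : ∀ᶠ x in 𝓝 p, ∃ e' : E ≃L[ℝ] F, HasFDerivAt f (e' : E →L[ℝ] F) x := by
      have hc : Continuous (fderiv ℝ f) := hf.continuous_fderiv (by simp)
      have := (hc.continuousAt (x := p)).eventually
        (by rw [he.fderiv]; exact ContinuousLinearEquiv.nhds e)
      filter_upwards [this] with x ⟨e', he'⟩
      exact ⟨e', he' ▸ (hf.differentiable (by simp) x).hasFDerivAt⟩
    have h2 : Tendsto o.symm (𝓝 (f p)) (𝓝 p) := by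
      have := o.tendsto_symm hop
      exact this
    filter_upwards [h2.eventually h1, o.open_target.mem_nhds hofp] with y ⟨e', he'⟩ hy
    exact o.contDiffAt_symm hy he' hf.contDiffAt
  obtain ⟨g, hg, hgo⟩ := exists_contDiff_eventuallyEq (f := o.symm) hev
    (fun y hy => ContDiffAt.contDiffWithinAt (n := ∞) (by exact hy))
  have hleft : ∀ x ∈ o.source, o.symm (f x) = x := fun x hx => o.left_inv hx
  refine ⟨g, hg, ?_, ?_, ?_⟩
  · rw [hgo.eq_of_nhds, hleft p hop]
  · filter_upwards [hf.continuous.continuousAt.eventually hgo, o.open_source.mem_nhds hop]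
      with x h1 h2
    rw [h1, hleft x h2]
  · filter_upwards [hgo, o.open_target.mem_nhds hofp] with y h1 h2
    rw [h1]
    exact o.right_inv h2

theorem isLocalDiffeoAt_of_eventually {f : E → F} {g : F → E} {p : E} (hf : ContDiff ℝ ∞ f)
    (hg : ContDiff ℝ ∞ g) (hgf : ∀ᶠ x in 𝓝 p, g (f x) = x)
    (hfg : ∀ᶠ y in 𝓝 (f p), f (g y) = y) : IsLocalDiffeoAt f p := by
  obtain ⟨U, hU, hUo, hpU⟩ := eventually_nhds_iff.1 hgf
  obtain ⟨V, hV, hVo, hpV⟩ := eventually_nhds_iff.1 hfg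
  refine ⟨U ∩ f ⁻¹' V, V ∩ g ⁻¹' U, g, hUo.inter (hVo.preimage hf.continuous), ⟨hpU, hpV⟩,
    hVo.inter (hUo.preimage hg.continuous), ⟨hpV, ?_⟩, hf.contDiffOn, hg.contDiffOn,
    fun x hx => ⟨hx.2, ?_⟩, fun y hy => ⟨hy.2, ?_⟩, fun x hx => hU x hx.1, fun y hy => hV y hy.1⟩
  · simpa [hU p hpU] using hpU
  · simpa [hU x hx.1] using hx.1
  · simpa [hV y hy.1] using hy.1

theorem isLocalDiffeoAt_of_injective [FiniteDimensional ℝ E] {f : E → E} {p : E}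
    (hf : ContDiff ℝ ∞ f) (hi : Function.Injective (fderiv ℝ f p)) : IsLocalDiffeoAt f p := by
  let e : E ≃L[ℝ] E :=
    (LinearEquiv.ofInjectiveEndo (fderiv ℝ f p).toLinearMap hi).toContinuousLinearEquiv
  have he : HasFDerivAt f (e : E →L[ℝ] E) p := by
    have : (e : E →L[ℝ] E) = fderiv ℝ f p := rfl
    exact this ▸ (hf.differentiable (by simp) p).hasFDerivAt
  obtain ⟨g, hg, -, h1, h2⟩ := exists_local_inverse hf he
  exact isLocalDiffeoAt_of_eventually hf hg h1 h2

/-- A germ of diffeomorphism has a globally smooth representative with injective derivative. -/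
theorem IsLocalDiffeoAt.exists_contDiff [FiniteDimensional ℝ E] {f : E → F} {p : E}
    (hf : IsLocalDiffeoAt f p) :
    ∃ g : E → F, ContDiff ℝ ∞ g ∧ g =ᶠ[𝓝 p] f ∧ Function.Injective (fderiv ℝ g p) := by
  obtain ⟨U, V, f', hU, hpU, hV, hpV, hfU, hfV, -, -, hl, -⟩ := hf
  obtain ⟨g, hg, hgf⟩ := exists_contDiff_eventuallyEq (hU.mem_nhds hpU) hfU
  refine ⟨g, hg, hgf, ?_⟩
  have h1 : HasFDerivAt g (fderiv ℝ g p) p := (hg.differentiable (by simp) p).hasFDerivAt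
  have h2 : HasFDerivAt f' (fderiv ℝ f' (f p)) (g p) := by
    rw [hgf.eq_of_nhds]
    exact ((hfV.contDiffAt (hV.mem_nhds hpV)).differentiableAt (by simp)).hasFDerivAt
  have h3 : f' ∘ g =ᶠ[𝓝 p] id := by
    filter_upwards [hgf, hU.mem_nhds hpU] with x hx hxU
    simp [hx, hl x hxU]
  have h4 := ((h2.comp p h1).congr_of_eventuallyEq h3.symm).unique (hasFDerivAt_id p)
  exact Function.LeftInverse.injective (g := fderiv ℝ f' (f p)) fun v => DFunLike.congr_fun h4 v

/-- Expansion of a smooth map along a curve of the form `P + h ^ 2 • z h`. -/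
theorem exists_quad_expansion [FiniteDimensional ℝ E] [FiniteDimensional ℝ F]
    {m : E → F} (hm : ContDiff ℝ ∞ m) (P : E) {z : ℝ → E}
    (hz : ContDiff ℝ ∞ z) : ∃ μ : ℝ → F, ContDiff ℝ ∞ μ ∧
      (∀ h, m (P + h ^ 2 • z h) = m P + h ^ 2 • μ h) ∧ μ 0 = fderiv ℝ m P (z 0) ∧
      deriv μ 0 = fderiv ℝ m P (deriv z 0) := by
  have : CompleteSpace F := FiniteDimensional.complete ℝ F
  let G : ℝ × E → F := fun x => m (P + x.1 • x.2)
  have hG : ContDiff ℝ ∞ G := by fun_prop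
  obtain ⟨k, hk, hk1, hk2⟩ := exists_hadamard_quotient hG
  have hk0 : ∀ w, k (0, w) = fderiv ℝ m P w := fun w => by
    rw [hk2]
    have h1 : HasFDerivAt (fun x : ℝ × E => P + x.1 • x.2)
        ((0 : ℝ) • ContinuousLinearMap.snd ℝ ℝ E +
          (ContinuousLinearMap.fst ℝ ℝ E).smulRight w) ((0 : ℝ), w) :=
      ((hasFDerivAt_fst (𝕜 := ℝ) (p := ((0 : ℝ), w))).smul
        (hasFDerivAt_snd (𝕜 := ℝ) (p := ((0 : ℝ), w)))).const_add P
    have h2 : HasFDerivAt m (fderiv ℝ m P) (P + (0 : ℝ) • w) := by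
      simpa using (hm.differentiable (by simp) P).hasFDerivAt
    have h3 := HasFDerivAt.comp ((0 : ℝ), w) h2 h1
    change fderiv ℝ (m ∘ _) _ _ = _
    rw [h3.fderiv]
    simp
  refine ⟨fun h => k (h ^ 2, z h), by fun_prop, fun h => ?_, ?_, ?_⟩
  · have := hk1 (h ^ 2) (z h)
    simpa [G] using this
  · simp [hk0]
  · have hkd : HasFDerivAt k (fderiv ℝ k (0, z 0)) (0, z 0) :=
      (hk.differentiable (by simp) _).hasFDerivAt
    have hz1 : HasDerivAt z (deriv z 0) 0 := (hz.differentiable (by simp) 0).hasDerivAt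
    have h1 : HasDerivAt (fun h : ℝ => (h ^ 2, z h)) ((0 : ℝ), deriv z 0) 0 := by
      have := ((hasDerivAt_id (0 : ℝ)).pow 2).prodMk hz1
      simpa using! this
    have hkd' : HasFDerivAt k (fderiv ℝ k (0, z 0)) ((0 : ℝ) ^ 2, z 0) := by
      simpa using hkd
    have h2 := HasFDerivAt.comp_hasDerivAt (0 : ℝ) hkd' h1
    have h3 : HasFDerivAt (fun w : E => k (0, w)) (fderiv ℝ k (0, z 0) ∘L
        ContinuousLinearMap.inr ℝ ℝ E) (z 0) :=
      HasFDerivAt.comp (z 0) hkd (hasFDerivAt_prodMk_right (0 : ℝ) (z 0))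
    have h4 : HasFDerivAt (fun w : E => k (0, w)) (fderiv ℝ m P) (z 0) := by
      simp_rw [hk0]
      exact (fderiv ℝ m P).hasFDerivAt
    have h5 := DFunLike.congr_fun (h3.unique h4) (deriv z 0)
    change deriv (k ∘ _) 0 = _
    rw [h2.deriv]
    simpa using h5

end LocalTools

section Indep

/-- Linear independence of three vectors of `ℝ³`. -/
def Indep3 (a b c : R3) : Prop :=
  ∀ x y z : ℝ, x • a + y • b + z • c = 0 → x = 0 ∧ y = 0 ∧ z = 0

theorem Indep3.exists_equiv {a b c : R3} (h : Indep3 a b c) :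
    ∃ M : R3 ≃L[ℝ] R3, M (1, 0, 0) = a ∧ M (0, 1, 0) = b ∧ M (0, 0, 1) = c := by
  let T : R3 →ₗ[ℝ] R3 := (LinearMap.fst ℝ ℝ (ℝ × ℝ)).smulRight a +
    (LinearMap.fst ℝ ℝ ℝ ∘ₗ LinearMap.snd ℝ ℝ (ℝ × ℝ)).smulRight b +
    (LinearMap.snd ℝ ℝ ℝ ∘ₗ LinearMap.snd ℝ ℝ (ℝ × ℝ)).smulRight c
  have hT : ∀ x, T x = x.1 • a + x.2.1 • b + x.2.2 • c := fun x => rfl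
  have hinj : Function.Injective T := by
    refine (injective_iff_map_eq_zero T).2 fun x hx => ?_
    obtain ⟨h1, h2, h3⟩ := h _ _ _ ((hT x).symm.trans hx)
    exact Prod.ext h1 (Prod.ext h2 h3)
  refine ⟨(LinearEquiv.ofInjectiveEndo T hinj).toContinuousLinearEquiv, ?_, ?_, ?_⟩ <;>
  · change T _ = _
    simp [hT]

theorem indep3_of_det3_ne_zero {a b c : R3} (h : det3 a b c ≠ 0) : Indep3 a b c := by
  intro x y z hxyz
  have h1 : x * a.1 + y * b.1 + z * c.1 = 0 := congrArg Prod.fst hxyz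
  have h2 : x * a.2.1 + y * b.2.1 + z * c.2.1 = 0 := congrArg (fun t : R3 => t.2.1) hxyz
  have h3 : x * a.2.2 + y * b.2.2 + z * c.2.2 = 0 := congrArg (fun t : R3 => t.2.2) hxyz
  refine ⟨(mul_eq_zero.1 (?_ : x * det3 a b c = 0)).resolve_right h,
    (mul_eq_zero.1 (?_ : y * det3 a b c = 0)).resolve_right h,
    (mul_eq_zero.1 (?_ : z * det3 a b c = 0)).resolve_right h⟩ <;> unfold det3
  · linear_combination (b.2.1 * c.2.2 - b.2.2 * c.2.1) * h1 - (b.1 * c.2.2 - b.2.2 * c.1) * h2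
      + (b.1 * c.2.1 - b.2.1 * c.1) * h3
  · linear_combination -(a.2.1 * c.2.2 - a.2.2 * c.2.1) * h1 + (a.1 * c.2.2 - a.2.2 * c.1) * h2
      - (a.1 * c.2.1 - a.2.1 * c.1) * h3
  · linear_combination (a.2.1 * b.2.2 - a.2.2 * b.2.1) * h1 - (a.1 * b.2.2 - a.2.2 * b.1) * h2
      + (a.1 * b.2.1 - a.2.1 * b.1) * h3

theorem Indep3.of_map {L : R3 →L[ℝ] R3} {a b c : R3} (h : Indep3 (L a) (L b) (L c)) :
    Indep3 a b c := fun x y z hxyz => h x y z (by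
  rw [← map_smul, ← map_smul, ← map_smul, ← map_add, ← map_add, hxyz, map_zero])

theorem Indep3.smul {a b c : R3} (h : Indep3 a b c) {r s t : ℝ} (hr : r ≠ 0) (hs : s ≠ 0)
    (ht : t ≠ 0) : Indep3 (r • a) (s • b) (t • c) := fun x y z hxyz => by
  simp only [smul_smul] at hxyz
  obtain ⟨h1, h2, h3⟩ := h _ _ _ hxyz
  exact ⟨by simpa [hr] using h1, by simpa [hs] using h2, by simpa [ht] using h3⟩

end Indep

section Fold

/-- Normal form of a fold: if `P = u ^ 2 • z u + B y`, then there are coordinates in which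
`x P = s ^ 2`, and `τ₀ y + δ * u ^ 3` is of the form `m P + s ^ 3 * k P`. -/
theorem exists_fold_normalForm_aux {z : ℝ → R3} (hz : ContDiff ℝ ∞ z) (hz0 : z 0 = (1, 0, 0))
    {B : R2 → R3} (hB : ContDiff ℝ ∞ B) (hB0 : B 0 = 0)
    (hBd : HasFDerivAt B (ContinuousLinearMap.inr ℝ ℝ R2) 0)
    {τ : R2 → ℝ} (hτ : ContDiff ℝ ∞ τ) (δ : ℝ) :
    ∃ (x m k : R3 → ℝ) (r : ℝ × R2 → ℝ), ContDiff ℝ ∞ x ∧ ContDiff ℝ ∞ m ∧ ContDiff ℝ ∞ k ∧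
      ContDiff ℝ ∞ r ∧ x 0 = 0 ∧ HasFDerivAt x (ContinuousLinearMap.fst ℝ ℝ R2) 0 ∧ r 0 = 1 ∧
      ∀ᶠ w in 𝓝 (0 : ℝ × R2), x (w.1 ^ 2 • z w.1 + B w.2) = (w.1 * r w) ^ 2 ∧
        τ w.2 + δ * w.1 ^ 3 = m (w.1 ^ 2 • z w.1 + B w.2) +
          (w.1 * r w) ^ 3 * k (w.1 ^ 2 • z w.1 + B w.2) := by
  have hB2 : ContDiff ℝ ∞ fun y => (B y).2 := contDiff_snd.comp hB
  have hB2d : HasFDerivAt (fun y => (B y).2)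
      ((ContinuousLinearEquiv.refl ℝ R2 : R2 ≃L[ℝ] R2) : R2 →L[ℝ] R2) 0 := by
    have := (ContinuousLinearMap.snd ℝ ℝ R2).hasFDerivAt.comp 0 hBd
    exact this
  obtain ⟨C, hC, hC0, hCl, -⟩ := exists_local_inverse hB2 hB2d
  have hB20 : (B 0).2 = 0 := by rw [hB0]; rfl
  simp only [hB20] at hC0
  let H : R2 → ℝ := fun q => (B (C q)).1
  have hH : ContDiff ℝ ∞ H := contDiff_fst.comp (hB.comp hC)
  have hH0 : H 0 = 0 := by simp [H, hC0, hB0]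
  have hHd : HasFDerivAt H (0 : R2 →L[ℝ] ℝ) 0 := by
    have h1 : HasFDerivAt C (fderiv ℝ C 0) 0 := (hC.differentiable (by simp) 0).hasFDerivAt
    have h2 : HasFDerivAt B (ContinuousLinearMap.inr ℝ ℝ R2) (C 0) := by rwa [hC0]
    have h3 := (ContinuousLinearMap.fst ℝ ℝ R2).hasFDerivAt.comp 0 (h2.comp 0 h1)
    convert! h3 using 1
  have had : ∀ h : R2 → ℝ, ContDiff ℝ ∞ h → ∃ K : ℝ × R2 × R2 → ℝ, ContDiff ℝ ∞ K ∧
      (∀ s q v, h (q - s • v) = h q + s * K (s, q, v)) ∧ K 0 = 0 := by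
    intro h hh
    have hG : ContDiff ℝ ∞ fun x : ℝ × R2 × R2 => h (x.2.1 - x.1 • x.2.2) := by fun_prop
    obtain ⟨K, hK, hK1, hK2⟩ := exists_hadamard_quotient hG
    refine ⟨K, hK, fun s q v => by simpa using hK1 s (q, v), ?_⟩
    have := hK2 0
    rw [← (hG.differentiable (by simp) _).lineDeriv_eq_fderiv, lineDeriv] at this
    simpa using! this
  obtain ⟨K, hK, hK1, hK0⟩ := had H hH
  obtain ⟨L, hL, hL1, -⟩ := had (fun q => τ (C q)) (hτ.comp hC)
  let e : ℝ × R2 → ℝ := fun w => (z w.1).1 + K (w.1 ^ 2, w.2, (z w.1).2)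
  have he : ContDiff ℝ ∞ e := by fun_prop
  have he0 : e 0 = 1 := by
    simp only [e, Prod.fst_zero, hz0, Prod.snd_zero]
    simpa using! hK0
  have hepos : ∀ᶠ w in 𝓝 (0 : ℝ × R2), 0 < e w :=
    he.continuous.continuousAt.eventually (by rw [he0]; exact eventually_gt_nhds one_pos)
  obtain ⟨r, hr, hre⟩ := exists_contDiff_eventuallyEq (f := fun w => √(e w)) hepos
    (fun w hw => (he.contDiffAt.sqrt (ne_of_gt hw)).contDiffWithinAt)
  have hr0 : r 0 = 1 := by rw [hre.eq_of_nhds, he0, Real.sqrt_one]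
  have hr2 : ∀ᶠ w in 𝓝 (0 : ℝ × R2), r w ^ 2 = e w := by
    filter_upwards [hre, hepos] with w h1 h2
    rw [h1, Real.sq_sqrt h2.le]
  let σ : ℝ × R2 → ℝ × R2 := fun w => (w.1 * r w, w.2)
  have hσ : ContDiff ℝ ∞ σ := by fun_prop
  have hσ0 : σ 0 = 0 := by simp [σ]
  have hσd : HasFDerivAt σ
      ((ContinuousLinearEquiv.refl ℝ (ℝ × R2) : (ℝ × R2) ≃L[ℝ] (ℝ × R2)) :
        (ℝ × R2) →L[ℝ] (ℝ × R2)) 0 := by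
    have h1 := (hasFDerivAt_fst (𝕜 := ℝ) (p := (0 : ℝ × R2))).mul
      (hr.differentiable (by simp) 0).hasFDerivAt
    have h2 := h1.prodMk (hasFDerivAt_snd (𝕜 := ℝ) (p := (0 : ℝ × R2)))
    convert! h2 using 1
    ext <;> simp [hr0]
  obtain ⟨ρ, hρ, hρ0, hρl, -⟩ := exists_local_inverse hσ hσd
  have hρ1 : ContDiff ℝ ∞ fun w => (ρ w).1 := contDiff_fst.comp hρ
  obtain ⟨υ, hυ, hυ1, -⟩ := exists_hadamard_quotient hρ1
  have hυ0 : ∀ᶠ q in 𝓝 (0 : R2), (ρ (0, q)).1 = 0 := by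
    have ht : Tendsto (fun q : R2 => ((0 : ℝ), q)) (𝓝 0) (𝓝 0) := by
      have : Continuous fun q : R2 => ((0 : ℝ), q) := by fun_prop
      simpa using! this.tendsto 0
    filter_upwards [ht.eventually hρl] with q hq
    have : σ (0, q) = (0, q) := by simp [σ]
    rw [this] at hq
    rw [hq]
  have hinv : ∀ᶠ w in 𝓝 (0 : ℝ × R2), w.1 = (w.1 * r w) * υ (σ w) := by
    have ht : Tendsto (fun w : ℝ × R2 => w.2) (𝓝 0) (𝓝 0) := continuous_snd.tendsto' _ _ rfl
    filter_upwards [hρl, ht.eventually hυ0] with w h1 h2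
    have h3 := hυ1 (w.1 * r w) w.2
    rw [h2, zero_add] at h3
    have h4 : ρ (w.1 * r w, w.2) = w := h1
    rw [h4] at h3
    exact h3
  let N : ℝ × R2 → ℝ := fun w => υ w ^ 2 *
    (L ((w.1 * υ w) ^ 2, w.2, (z (w.1 * υ w)).2) + δ * (w.1 * υ w))
  have hN : ContDiff ℝ ∞ N := by fun_prop
  obtain ⟨ne, no, hne, hno, hNw⟩ := exists_whitney_even_odd hN
  let x : R3 → ℝ := fun P => P.1 - H P.2
  have hx : ContDiff ℝ ∞ x := by fun_prop
  let Q : ℝ × R2 → ℝ × R2 := fun w => (w.1, w.1 ^ 2 • (z w.1).2 + (B w.2).2)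
  have hQ : ContDiff ℝ ∞ Q := by fun_prop
  have hQ0 : Q 0 = 0 := by simp [Q, hB20]
  have hQt : Tendsto Q (𝓝 0) (𝓝 0) := hQ.continuous.tendsto' _ _ hQ0
  have hσt : Tendsto σ (𝓝 0) (𝓝 0) := hσ.continuous.tendsto' _ _ hσ0
  have ht2 : Tendsto (fun w : ℝ × R2 => w.2) (𝓝 0) (𝓝 0) := continuous_snd.tendsto' _ _ rfl
  refine ⟨x, fun P => τ (C P.2) + x P * ne (x P, P.2), fun P => no (x P, P.2), fun w => r (Q w),
    hx, by fun_prop, by fun_prop, by fun_prop, by simp [x, hH0], ?_, by simp [hQ0, hr0], ?_⟩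
  · have h1 : HasFDerivAt H (0 : R2 →L[ℝ] ℝ) ((0 : R3).2) := hHd
    have h2 := (hasFDerivAt_fst (𝕜 := ℝ) (p := (0 : R3))).sub
      (h1.comp (0 : R3) (hasFDerivAt_snd (𝕜 := ℝ) (p := (0 : R3))))
    convert! h2 using 1
    simp
  · filter_upwards [hQt.eventually hr2, ht2.eventually hCl, hQt.eventually hinv,
      (hσt.comp hQt).eventually hNw] with w h1 h2 h3 h4
    obtain ⟨u, y⟩ := w
    set q := u ^ 2 • (z u).2 + (B y).2 with hq
    have hQw : Q (u, y) = (u, q) := rfl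
    have hP2 : (u ^ 2 • z u + B y).2 = q := rfl
    have hP1 : (u ^ 2 • z u + B y).1 = u ^ 2 * (z u).1 + (B y).1 := rfl
    simp only at h1 h2 h3 h4 ⊢
    rw [Function.comp_apply] at h4
    rw [hQw] at h1 h3 h4 ⊢
    have hσw : σ (u, q) = (u * r (u, q), q) := rfl
    rw [hσw] at h3 h4
    simp only at h3 h4
    have hy : q - u ^ 2 • (z u).2 = (B y).2 := by rw [hq]; abel
    have hB1 : (B y).1 = H q + u ^ 2 * K (u ^ 2, q, (z u).2) := by
      rw [← hK1, hy]
      simp only [H, h2]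
    have hτ1 : τ y = τ (C q) + u ^ 2 * L (u ^ 2, q, (z u).2) := by
      rw [← hL1, hy, h2]
    have hxP : x (u ^ 2 • z u + B y) = (u * r (u, q)) ^ 2 := by
      simp only [x, hP1, hP2, hB1]
      rw [mul_pow, h1]
      simp only [e]
      ring
    refine ⟨hxP, ?_⟩
    rw [hxP, hP2]
    set s := u * r (u, q)
    simp only [N] at h4
    rw [← h3] at h4
    have h5 : u ^ 2 = s ^ 2 * υ (s, q) ^ 2 := by
      rw [← mul_pow, ← h3]
    rw [hτ1]
    linear_combination (L (u ^ 2, q, (z u).2) + δ * u) * h5 + s ^ 2 * h4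

theorem exists_fold_normalForm {z : ℝ → R3} (hz : ContDiff ℝ ∞ z)
    {B : R2 → R3} (hB : ContDiff ℝ ∞ B) (hB0 : B 0 = 0) {D : R2 →L[ℝ] R3}
    (hBd : HasFDerivAt B D 0) (hi : Indep3 (z 0) (D (1, 0)) (D (0, 1)))
    {τ : R2 → ℝ} (hτ : ContDiff ℝ ∞ τ) (δ : ℝ) :
    ∃ (x m k : R3 → ℝ) (r : ℝ × R2 → ℝ), ContDiff ℝ ∞ x ∧ ContDiff ℝ ∞ m ∧ ContDiff ℝ ∞ k ∧
      ContDiff ℝ ∞ r ∧ x 0 = 0 ∧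
      (fderiv ℝ x 0 (z 0) = 1 ∧ ∀ y, fderiv ℝ x 0 (D y) = 0) ∧ r 0 = 1 ∧
      ∀ᶠ w in 𝓝 (0 : ℝ × R2), x (w.1 ^ 2 • z w.1 + B w.2) = (w.1 * r w) ^ 2 ∧
        τ w.2 + δ * w.1 ^ 3 = m (w.1 ^ 2 • z w.1 + B w.2) +
          (w.1 * r w) ^ 3 * k (w.1 ^ 2 • z w.1 + B w.2) := by
  obtain ⟨M, hM1, hM2, hM3⟩ := hi.exists_equiv
  have hD : ∀ y, M.symm (D y) = (0, y) := fun y => by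
    rw [M.symm_apply_eq]
    have h1 : y = y.1 • ((1 : ℝ), (0 : ℝ)) + y.2 • ((0 : ℝ), (1 : ℝ)) := by ext <;> simp
    have h2 : ((0 : ℝ), y) =
        y.1 • ((0 : ℝ), (1 : ℝ), (0 : ℝ)) + y.2 • ((0 : ℝ), (0 : ℝ), (1 : ℝ)) := by
      ext <;> simp
    rw [h2, map_add, map_smul, map_smul, hM2, hM3, ← map_smul, ← map_smul, ← map_add, ← h1]
  have hz0 : M.symm (z 0) = (1, 0, 0) := by rw [M.symm_apply_eq, hM1]
  have hBd' : HasFDerivAt (fun y => M.symm (B y)) (ContinuousLinearMap.inr ℝ ℝ R2) 0 := by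
    have := M.symm.toContinuousLinearMap.hasFDerivAt.comp (0 : R2) hBd
    convert! this using 1
    refine ContinuousLinearMap.ext fun y => ?_
    exact (hD y).symm
  obtain ⟨x, m, k, r, hx, hm, hk, hr, hx0, hxd, hr0, hev⟩ :=
    exists_fold_normalForm_aux (M.symm.contDiff.comp hz) hz0 (M.symm.contDiff.comp hB)
      (by simp [hB0]) hBd' hτ δ
  have hxd' : HasFDerivAt (x ∘ M.symm)
      (ContinuousLinearMap.fst ℝ ℝ R2 ∘L (M.symm : R3 →L[ℝ] R3)) 0 := by
    have h1 : HasFDerivAt x (ContinuousLinearMap.fst ℝ ℝ R2) (M.symm 0) := by simpa using hxd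
    exact h1.comp 0 M.symm.toContinuousLinearMap.hasFDerivAt
  refine ⟨x ∘ M.symm, m ∘ M.symm, k ∘ M.symm, r, hx.comp M.symm.contDiff,
    hm.comp M.symm.contDiff, hk.comp M.symm.contDiff, hr, by simp [hx0], ?_, hr0, ?_⟩
  · rw [hxd'.fderiv]
    exact ⟨by simp [hz0], fun y => by simp [hD]⟩
  · filter_upwards [hev] with w hw
    simpa using hw

end Fold

section Sufficiency

theorem hasDerivAt_add_smul_comp_sq {a : ℝ → R3} {b : ℝ → R3} (ha : ContDiff ℝ ∞ a)
    (hb : ContDiff ℝ ∞ b) : HasDerivAt (fun u => a (u ^ 2) + u • b (u ^ 2)) (b 0) 0 := by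
  have hsq : HasDerivAt (fun u : ℝ => u ^ 2) 0 0 := by simpa using hasDerivAt_pow 2 (0 : ℝ)
  have key : ∀ {c : ℝ → R3}, ContDiff ℝ ∞ c → HasDerivAt (fun u => c (u ^ 2)) 0 0 :=
    fun {c} hc => by
      have h0 : HasDerivAt c (deriv c 0) 0 := (hc.differentiable (by simp) _).hasDerivAt
      simpa using! h0.scomp_of_eq (0 : ℝ) hsq (by simp)
  have h3 := (key ha).add ((hasDerivAt_id (0 : ℝ)).smul (key hb))
  simpa using! h3

/-- A curve `u ^ 2 • z u` factors smoothly through the cusp `(u ^ 2, u ^ 3)`. -/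
theorem exists_factor_through_cusp {z : ℝ → R3} (hz : ContDiff ℝ ∞ z) :
    ∃ (A : R2 → R3) (D : R2 →L[ℝ] R3), ContDiff ℝ ∞ A ∧ A 0 = 0 ∧ HasFDerivAt A D 0 ∧
      D (1, 0) = z 0 ∧ D (0, 1) = deriv z 0 ∧
      ∀ᶠ u in 𝓝 (0 : ℝ), A (u ^ 2, u ^ 3) = u ^ 2 • z u := by
  have key : ∀ pr : R3 →L[ℝ] ℝ, ∃ h k : ℝ → ℝ, ContDiff ℝ ∞ h ∧ ContDiff ℝ ∞ k ∧
      ∀ᶠ u in 𝓝 (0 : ℝ), pr (z u) = h (u ^ 2) + u * k (u ^ 2) := fun pr => by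
    have hg : ContDiff ℝ ∞ fun x : ℝ × ℝ × ℝ => pr (z x.1) := by fun_prop
    obtain ⟨h, k, hh, hk, hev⟩ := exists_whitney_even_odd hg
    refine ⟨fun u => h (u, 0), fun u => k (u, 0), by fun_prop, by fun_prop, ?_⟩
    have ht : Tendsto (fun u : ℝ => (u, (0 : ℝ × ℝ))) (𝓝 0) (𝓝 0) := by
      have : Continuous fun u : ℝ => (u, (0 : ℝ × ℝ)) := by fun_prop
      exact this.tendsto' _ _ rfl
    exact ht.eventually hev
  obtain ⟨h1, k1, hh1, hk1, e1⟩ := key (ContinuousLinearMap.fst ℝ ℝ R2)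
  obtain ⟨h2, k2, hh2, hk2, e2⟩ :=
    key (ContinuousLinearMap.fst ℝ ℝ ℝ ∘L ContinuousLinearMap.snd ℝ ℝ R2)
  obtain ⟨h3, k3, hh3, hk3, e3⟩ :=
    key (ContinuousLinearMap.snd ℝ ℝ ℝ ∘L ContinuousLinearMap.snd ℝ ℝ R2)
  let h : ℝ → R3 := fun x => (h1 x, h2 x, h3 x)
  let k : ℝ → R3 := fun x => (k1 x, k2 x, k3 x)
  have hh : ContDiff ℝ ∞ h := by fun_prop
  have hk : ContDiff ℝ ∞ k := by fun_prop
  have hzk : z =ᶠ[𝓝 0] fun u => h (u ^ 2) + u • k (u ^ 2) := by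
    filter_upwards [e1, e2, e3] with u e1 e2 e3
    exact Prod.ext e1 (Prod.ext e2 e3)
  have hz0 : z 0 = h 0 := by rw [hzk.eq_of_nhds]; simp
  have hz1 : deriv z 0 = k 0 := by
    rw [hzk.deriv_eq, (hasDerivAt_add_smul_comp_sq hh hk).deriv]
  refine ⟨fun y => y.1 • h y.1 + y.2 • k y.1, (ContinuousLinearMap.fst ℝ ℝ ℝ).smulRight (h 0) +
    (ContinuousLinearMap.snd ℝ ℝ ℝ).smulRight (k 0), by fun_prop, by simp, ?_,
    by simp [hz0], by simp [hz1], ?_⟩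
  · have hf := hasFDerivAt_fst (𝕜 := ℝ) (p := (0 : R2))
    have hs := hasFDerivAt_snd (𝕜 := ℝ) (p := (0 : R2))
    have d1 : HasFDerivAt (fun y : R2 => h y.1) (fderiv ℝ (fun y : R2 => h y.1) 0) 0 :=
      (ContDiff.differentiable (n := ∞) (by fun_prop) (by simp) _).hasFDerivAt
    have d2 : HasFDerivAt (fun y : R2 => k y.1) (fderiv ℝ (fun y : R2 => k y.1) 0) 0 :=
      (ContDiff.differentiable (n := ∞) (by fun_prop) (by simp) _).hasFDerivAt
    have := (hf.smul d1).add (hs.smul d2)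
    convert! this using 1
    simp
  · filter_upwards [hzk] with u hu
    rw [hu, smul_add, smul_smul]
    ring_nf

theorem fderiv_apply_of_sq_mul {m : R3 → ℝ} (hm : ContDiff ℝ ∞ m) {z : ℝ → R3}
    (hz : ContDiff ℝ ∞ z) {c : ℝ → ℝ} (hc : ContDiff ℝ ∞ c)
    (h : ∀ᶠ u in 𝓝 (0 : ℝ), m (u ^ 2 • z u) = u ^ 2 * c u) :
    fderiv ℝ m 0 (z 0) = c 0 ∧ fderiv ℝ m 0 (deriv z 0) = deriv c 0 := by
  obtain ⟨μ, hμ, h1, h2, h3⟩ := exists_quad_expansion hm 0 hz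
  have hm0 : m 0 = 0 := by simpa using h.self_of_nhds
  have hne : ∀ᶠ u in 𝓝[≠] (0 : ℝ), μ u = c u := by
    filter_upwards [h.filter_mono nhdsWithin_le_nhds, self_mem_nhdsWithin] with u hu hu0
    have h4 := h1 u
    rw [zero_add, hu, hm0, zero_add, smul_eq_mul] at h4
    exact (mul_left_cancel₀ (pow_ne_zero 2 hu0) h4).symm
  have h0 : μ 0 = c 0 := by
    have t1 : Tendsto μ (𝓝[≠] 0) (𝓝 (μ 0)) :=
      hμ.continuous.continuousAt.mono_left nhdsWithin_le_nhds
    have t2 : Tendsto c (𝓝[≠] 0) (𝓝 (c 0)) :=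
      hc.continuous.continuousAt.mono_left nhdsWithin_le_nhds
    exact tendsto_nhds_unique (t1.congr' hne) t2
  have hall : μ =ᶠ[𝓝 0] c := by
    rw [eventually_nhdsWithin_iff] at hne
    filter_upwards [hne] with u hu
    rcases eq_or_ne u 0 with rfl | h'
    · exact h0
    · exact hu h'
  exact ⟨by rw [← h2, h0], by rw [← h3, hall.deriv_eq]⟩

theorem fderiv_apply_of_cube_mul {m : R3 → ℝ} (hm : ContDiff ℝ ∞ m) {z : ℝ → R3}
    (hz : ContDiff ℝ ∞ z) {c : ℝ → ℝ} (hc : ContDiff ℝ ∞ c)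
    (h : ∀ᶠ u in 𝓝 (0 : ℝ), m (u ^ 2 • z u) = u ^ 3 * c u) :
    fderiv ℝ m 0 (z 0) = 0 ∧ fderiv ℝ m 0 (deriv z 0) = c 0 := by
  obtain ⟨h1, h2⟩ := fderiv_apply_of_sq_mul hm hz (c := fun u => u * c u) (by fun_prop) (by
    filter_upwards [h] with u hu
    rw [hu]; ring)
  have hd : HasDerivAt (fun u => u * c u) (c 0) 0 := by
    simpa using! (hasDerivAt_id (0 : ℝ)).mul (hc.differentiable (by simp) 0).hasDerivAt
  exact ⟨by rw [h1, zero_mul], by rw [h2, hd.deriv]⟩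

theorem Indep3.exists_combination {a b c : R3} (h : Indep3 a b c) (v : R3) :
    ∃ x y z : ℝ, v = x • a + y • b + z • c := by
  obtain ⟨M, rfl, rfl, rfl⟩ := h.exists_equiv
  obtain ⟨⟨x, y, z⟩, rfl⟩ := M.surjective v
  refine ⟨x, y, z, ?_⟩
  rw [← map_smul, ← map_smul, ← map_smul, ← map_add, ← map_add]
  simp

theorem Indep3.eq_zero {a b c : R3} (h : Indep3 a b c) {l : R3 →L[ℝ] ℝ} (ha : l a = 0)
    (hb : l b = 0) (hc : l c = 0) : l = 0 := by
  refine ContinuousLinearMap.ext fun v => ?_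
  obtain ⟨x, y, z, rfl⟩ := h.exists_combination v
  simp [ha, hb, hc]

theorem exists_smooth_cbrt {c : ℝ} (hc : c ≠ 0) :
    ∃ g : ℝ → ℝ, ContDiff ℝ ∞ g ∧ g c ^ 3 = c ∧ ∀ᶠ y in 𝓝 c, g y ^ 3 = y := by
  obtain ⟨d, hd⟩ : ∃ d : ℝ, d ^ 3 = c := by
    rcases hc.lt_or_gt with h | h
    · exact ⟨-(-c) ^ ((3 : ℕ) : ℝ)⁻¹, by
        rw [Odd.neg_pow (by decide), Real.rpow_inv_natCast_pow (by linarith) (by simp), neg_neg]⟩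
    · exact ⟨c ^ ((3 : ℕ) : ℝ)⁻¹, Real.rpow_inv_natCast_pow h.le (by simp)⟩
  have hd0 : d ≠ 0 := by rintro rfl; exact hc (by simp [← hd])
  have h3 : 3 * d ^ 2 ≠ 0 := by positivity
  have hder : HasFDerivAt (fun y : ℝ => y ^ 3)
      ((ContinuousLinearEquiv.unitsEquivAut ℝ (Units.mk0 _ h3) : ℝ ≃L[ℝ] ℝ) : ℝ →L[ℝ] ℝ) d := by
    have := (hasDerivAt_pow 3 d).hasFDerivAt
    convert! this using 1
  obtain ⟨g, hg, hg0, -, hr⟩ := exists_local_inverse (f := fun y : ℝ => y ^ 3) (by fun_prop) hder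
  rw [hd] at hg0 hr
  exact ⟨g, hg, by rw [hg0, hd], hr⟩

theorem fD4p_normalForm (a b : ℝ) :
    fD4p ((a - b) / 2, (a + b) / (2 * √3)) =
      ((a ^ 2 - b ^ 2) / (4 * √3), (a ^ 2 + b ^ 2) / 2, (a ^ 3 + b ^ 3) / (6 * √3)) := by
  have h : √3 ^ 2 = 3 := Real.sq_sqrt (by norm_num)
  have h0 : √3 ≠ 0 := by positivity
  refine Prod.ext ?_ (Prod.ext ?_ ?_) <;> simp only [fD4p] <;> field_simp
  · ring
  · rw [h]; ring
  · rw [h]; ring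

/-- Sufficient criterion for a `D₄⁺` singularity, at the origin. -/
theorem exists_fD4p_of_indep3 {a b : ℝ → R3} (ha : ContDiff ℝ ∞ a) (hb : ContDiff ℝ ∞ b)
    (h1 : Indep3 (a 0) (b 0) (deriv a 0)) (h2 : Indep3 (a 0) (b 0) (deriv b 0)) :
    ∃ (Φ : R2 → R2) (Ψ : R3 → R3), ContDiff ℝ ∞ Φ ∧ ContDiff ℝ ∞ Ψ ∧ Φ 0 = 0 ∧ Ψ 0 = 0 ∧
      Function.Injective (fderiv ℝ Φ 0) ∧ Function.Injective (fderiv ℝ Ψ 0) ∧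
      ∀ᶠ q in 𝓝 (0 : R2), Ψ (q.1 ^ 2 • a q.1 + q.2 ^ 2 • b q.2) = fD4p (Φ q) := by
  obtain ⟨A, DA, hA, hA0, hAd, hA1, hA2, hAev⟩ := exists_factor_through_cusp ha
  obtain ⟨B, DB, hB, hB0, hBd, hB1, hB2, hBev⟩ := exists_factor_through_cusp hb
  have h1' : Indep3 (b 0) (a 0) (deriv a 0) := fun x y z h => by
    obtain ⟨e1, e2, e3⟩ := h1 y x z (by rw [← h]; abel)
    exact ⟨e2, e1, e3⟩
  obtain ⟨x1, m1, k1, r1, hx1, hm1, hk1, hr1, hx10, ⟨hx1a, hx1D⟩, hr10, hev1⟩ :=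
    exists_fold_normalForm ha hB hB0 hBd (by rwa [hB1, hB2]) (τ := Prod.snd) contDiff_snd 0
  obtain ⟨x2, m2, k2, r2, hx2, hm2, hk2, hr2, hx20, ⟨hx2b, hx2D⟩, hr20, hev2⟩ :=
    exists_fold_normalForm hb hA hA0 hAd (by rwa [hA1, hA2]) (τ := fun _ => 0) contDiff_const 1
  have tfst : Tendsto (fun u : ℝ => (u, (0 : R2))) (𝓝 0) (𝓝 0) := by
    have : Continuous fun u : ℝ => (u, (0 : R2)) := by fun_prop
    exact this.tendsto' _ _ rfl
  have tsnd : Tendsto (fun y : R2 => ((0 : ℝ), y)) (𝓝 0) (𝓝 0) := by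
    have : Continuous fun y : R2 => ((0 : ℝ), y) := by fun_prop
    exact this.tendsto' _ _ rfl
  have hm1D : ∀ y : R2, fderiv ℝ m1 0 (DB y) = y.2 := fun y => by
    have e1 : (fun y => m1 (B y)) =ᶠ[𝓝 0] Prod.snd := by
      filter_upwards [tsnd.eventually hev1] with y hy
      simpa using hy.2.symm
    have e2 : HasFDerivAt m1 (fderiv ℝ m1 0) (B 0) := by
      rw [hB0]; exact (hm1.differentiable (by simp) 0).hasFDerivAt
    have e3 := ((e2.comp 0 hBd).congr_of_eventuallyEq e1.symm).unique hasFDerivAt_snd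
    exact DFunLike.congr_fun e3 y
  have hm2D : ∀ y : R2, fderiv ℝ m2 0 (DA y) = 0 := fun y => by
    have e1 : (fun y => m2 (A y)) =ᶠ[𝓝 0] fun _ => 0 := by
      filter_upwards [tsnd.eventually hev2] with y hy
      simpa using hy.2.symm
    have e2 : HasFDerivAt m2 (fderiv ℝ m2 0) (A 0) := by
      rw [hA0]; exact (hm2.differentiable (by simp) 0).hasFDerivAt
    have e3 := ((e2.comp 0 hAd).congr_of_eventuallyEq e1.symm).unique (hasFDerivAt_const (0 : ℝ) 0)
    exact DFunLike.congr_fun e3 y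
  obtain ⟨hm1a, hm1a'⟩ := fderiv_apply_of_cube_mul hm1 ha
    (c := fun u => -(r1 (u, 0) ^ 3 * k1 (u ^ 2 • a u))) (by fun_prop) (by
      filter_upwards [tfst.eventually hev1] with u hu
      have := hu.2
      simp only [hB0, add_zero] at this
      simp only [Prod.snd_zero] at this
      linear_combination -this)
  obtain ⟨hm2b, hm2b'⟩ := fderiv_apply_of_cube_mul hm2 hb
    (c := fun v => 1 - r2 (v, 0) ^ 3 * k2 (v ^ 2 • b v)) (by fun_prop) (by
      filter_upwards [tfst.eventually hev2] with v hv
      have := hv.2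
      simp only [hA0, add_zero] at this
      linear_combination -this)
  have hr10' : r1 (0, 0) = 1 := hr10
  have hr20' : r2 (0, 0) = 1 := hr20
  have hm1b : fderiv ℝ m1 0 (b 0) = 0 := by rw [← hB1, hm1D]
  have hm1b' : fderiv ℝ m1 0 (deriv b 0) = 1 := by rw [← hB2, hm1D]
  have hm2z : fderiv ℝ m2 0 = 0 :=
    h1.eq_zero (by rw [← hA1, hm2D]) hm2b (by rw [← hA2, hm2D])
  have hk20 : k2 0 = 1 := by
    simp [hm2z, hr20'] at hm2b'
    linarith
  have hk10 : -k1 0 ≠ 0 := fun h0 => by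
    have h3 : fderiv ℝ m1 0 = 0 := h1.eq_zero hm1a hm1b (by
      rw [hm1a']; simpa [hr10'] using h0)
    rw [h3] at hm1b'
    simp at hm1b'
  obtain ⟨c1, hc1, hc10, hc1ev⟩ := exists_smooth_cbrt hk10
  obtain ⟨c2, hc2, hc20, hc2ev⟩ := exists_smooth_cbrt (c := k2 0) (by rw [hk20]; exact one_ne_zero)
  let l1 : R3 → ℝ := fun P => c1 (-k1 P)
  let l2 : R3 → ℝ := fun P => c2 (k2 P)
  have hl1 : ContDiff ℝ ∞ l1 := by fun_prop
  have hl2 : ContDiff ℝ ∞ l2 := by fun_prop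
  have hl10 : l1 0 ≠ 0 := fun h => hk10 (by rw [← hc10]; simp only [l1] at h; rw [h]; simp)
  have hl20 : l2 0 ≠ 0 := fun h => by
    simp only [l2] at h
    rw [h, hk20] at hc20
    norm_num at hc20
  have hl1ev : ∀ᶠ P in 𝓝 (0 : R3), l1 P ^ 3 = -k1 P :=
    (hk1.neg.continuous.continuousAt (x := (0 : R3))).eventually hc1ev
  have hl2ev : ∀ᶠ P in 𝓝 (0 : R3), l2 P ^ 3 = k2 P :=
    (hk2.continuous.continuousAt (x := (0 : R3))).eventually hc2ev
  let f : R2 → R3 := fun q => q.1 ^ 2 • a q.1 + q.2 ^ 2 • b q.2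
  have hf : ContDiff ℝ ∞ f := by fun_prop
  have hf0 : f 0 = 0 := by simp [f]
  let s1 : R2 → ℝ := fun q => r1 (q.1, q.2 ^ 2, q.2 ^ 3) * l1 (f q)
  let s2 : R2 → ℝ := fun q => r2 (q.2, q.1 ^ 2, q.1 ^ 3) * l2 (f q)
  have hs1 : ContDiff ℝ ∞ s1 := by fun_prop
  have hs2 : ContDiff ℝ ∞ s2 := by fun_prop
  have hs10 : s1 0 ≠ 0 := by
    have : s1 0 = l1 0 := by simp [s1, hf0, show r1 (0, 0, 0) = 1 from hr10]
    rwa [this]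
  have hs20 : s2 0 ≠ 0 := by
    have : s2 0 = l2 0 := by simp [s2, hf0, show r2 (0, 0, 0) = 1 from hr20]
    rwa [this]
  have h3 : √3 ≠ 0 := by positivity
  let X : R3 → ℝ := fun P => x1 P * l1 P ^ 2
  let Y : R3 → ℝ := fun P => x2 P * l2 P ^ 2
  let Z : R3 → ℝ := fun P => m1 P - m2 P
  have hX : ContDiff ℝ ∞ X := by fun_prop
  have hY : ContDiff ℝ ∞ Y := by fun_prop
  have hZ : ContDiff ℝ ∞ Z := by fun_prop
  have hXd : HasFDerivAt X (l1 0 ^ 2 • fderiv ℝ x1 0) 0 := by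
    have e1 := (hx1.differentiable (by simp) 0).hasFDerivAt
    have e2 := ((hl1.pow 2).differentiable (by simp) 0).hasFDerivAt
    have := e1.mul e2
    simpa [hx10] using! this
  have hYd : HasFDerivAt Y (l2 0 ^ 2 • fderiv ℝ x2 0) 0 := by
    have e1 := (hx2.differentiable (by simp) 0).hasFDerivAt
    have e2 := ((hl2.pow 2).differentiable (by simp) 0).hasFDerivAt
    have := e1.mul e2
    simpa [hx20] using! this
  have hZd : HasFDerivAt Z (fderiv ℝ m1 0) 0 := by
    have := (hm1.differentiable (by simp) 0).hasFDerivAt.sub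
      (hm2.differentiable (by simp) 0).hasFDerivAt
    rw [hm2z, sub_zero] at this
    exact this
  let U : R2 → ℝ := fun q => q.1 * s1 q
  let W : R2 → ℝ := fun q => q.2 * s2 q
  have hU : ContDiff ℝ ∞ U := by fun_prop
  have hW : ContDiff ℝ ∞ W := by fun_prop
  have hUd : HasFDerivAt U (s1 0 • ContinuousLinearMap.fst ℝ ℝ ℝ) 0 := by
    have := (hasFDerivAt_fst (𝕜 := ℝ) (p := (0 : R2))).mul
      (hs1.differentiable (by simp) 0).hasFDerivAt
    simpa using! this
  have hWd : HasFDerivAt W (s2 0 • ContinuousLinearMap.snd ℝ ℝ ℝ) 0 := by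
    have := (hasFDerivAt_snd (𝕜 := ℝ) (p := (0 : R2))).mul
      (hs2.differentiable (by simp) 0).hasFDerivAt
    simpa using! this
  refine ⟨fun q => ((U q - W q) * (1 / 2), (U q + W q) * (1 / (2 * √3))),
    fun P => ((X P - Y P) * (1 / (4 * √3)), (X P + Y P) * (1 / 2), Z P * (1 / (6 * √3))),
    by fun_prop, by fun_prop, by simp [U, W], ?_, ?_, ?_, ?_⟩
  · have : Z 0 = 0 := by
      have e1 := hev1.self_of_nhds
      have e2 := hev2.self_of_nhds
      simp [hA0, hB0] at e1 e2
      simp [Z, ← e1.2, ← e2.2]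
    simp [X, Y, hx10, hx20, this]
  · have hd := ((hUd.sub hWd).mul_const (1 / 2 : ℝ)).prodMk
      ((hUd.add hWd).mul_const (1 / (2 * √3)))
    have e := hd.fderiv
    refine (injective_iff_map_eq_zero _).2 fun q hq => ?_
    have hq' := (DFunLike.congr_fun e q).symm.trans hq
    have q1 := congrArg Prod.fst hq'
    have q2 := congrArg Prod.snd hq'
    simp at q1 q2
    have q2' : s1 0 * q.1 + s2 0 * q.2 = 0 :=
      (mul_eq_zero.1 (by linear_combination q2 :
        (√3)⁻¹ * 2⁻¹ * (s1 0 * q.1 + s2 0 * q.2) = 0)).resolve_left (by simp)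
    exact Prod.ext ((mul_eq_zero.1 (by linarith : s1 0 * q.1 = 0)).resolve_left hs10)
      ((mul_eq_zero.1 (by linarith : s2 0 * q.2 = 0)).resolve_left hs20)
  · have hd := ((hXd.sub hYd).mul_const (1 / (4 * √3))).prodMk
      (((hXd.add hYd).mul_const (1 / 2 : ℝ)).prodMk (hZd.mul_const (1 / (6 * √3))))
    have e := hd.fderiv
    refine (injective_iff_map_eq_zero _).2 fun v hv => ?_
    have hv' := (DFunLike.congr_fun e v).symm.trans hv
    obtain ⟨α, β, γ, rfl⟩ := h2.exists_combination v
    have v1 := congrArg Prod.fst hv'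
    have v2 := congrArg (fun t : R3 => t.2.1) hv'
    have v3 := congrArg (fun t : R3 => t.2.2) hv'
    have hx1b : fderiv ℝ x1 0 (b 0) = 0 := by rw [← hB1, hx1D]
    have hx1b' : fderiv ℝ x1 0 (deriv b 0) = 0 := by rw [← hB2, hx1D]
    have hx2a : fderiv ℝ x2 0 (a 0) = 0 := by rw [← hA1, hx2D]
    simp [hx1b, hx1b', hx2a, hx1a, hx2b, hm1a, hm1b, hm1b'] at v1 v2 v3
    subst v3
    simp at v1 v2
    have ea : l1 0 ^ 2 * α = 0 := by linarith
    have eb : l2 0 ^ 2 * β = 0 := by linarith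
    have ea' := (mul_eq_zero.1 ea).resolve_left (pow_ne_zero 2 hl10)
    have eb' := (mul_eq_zero.1 eb).resolve_left (pow_ne_zero 2 hl20)
    simp [ea', eb']
  · have t1 : Tendsto (fun q : R2 => (q.1, q.2 ^ 2, q.2 ^ 3)) (𝓝 0) (𝓝 0) := by
      have : Continuous fun q : R2 => (q.1, q.2 ^ 2, q.2 ^ 3) := by fun_prop
      exact this.tendsto' _ _ (by simp)
    have t2 : Tendsto (fun q : R2 => (q.2, q.1 ^ 2, q.1 ^ 3)) (𝓝 0) (𝓝 0) := by
      have : Continuous fun q : R2 => (q.2, q.1 ^ 2, q.1 ^ 3) := by fun_prop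
      exact this.tendsto' _ _ (by simp)
    have tu : Tendsto (fun q : R2 => q.1) (𝓝 0) (𝓝 0) := continuous_fst.tendsto' _ _ rfl
    have tv : Tendsto (fun q : R2 => q.2) (𝓝 0) (𝓝 0) := continuous_snd.tendsto' _ _ rfl
    have tf : Tendsto f (𝓝 0) (𝓝 0) := hf.continuous.tendsto' _ _ hf0
    filter_upwards [t1.eventually hev1, t2.eventually hev2, tu.eventually hAev, tv.eventually hBev,
      tf.eventually hl1ev, tf.eventually hl2ev] with q e1 e2 e3 e4 e5 e6
    have f1 : q.1 ^ 2 • a q.1 + B (q.2 ^ 2, q.2 ^ 3) = f q := by simp only [f, e4]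
    have f2 : q.2 ^ 2 • b q.2 + A (q.1 ^ 2, q.1 ^ 3) = f q := by simp only [f, e3]; abel
    simp only [f1, f2] at e1 e2
    have g1 : X (f q) = U q ^ 2 := by simp only [X, U, s1, e1.1]; ring
    have g2 : Y (f q) = W q ^ 2 := by simp only [Y, W, s2, e2.1]; ring
    have g3 : Z (f q) = U q ^ 3 + W q ^ 3 := by
      simp only [Z, U, W, s1, s2, mul_pow, e5, e6]
      linear_combination e2.2 - e1.2
    change ((X (f q) - Y (f q)) * (1 / (4 * √3)), (X (f q) + Y (f q)) * (1 / 2),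
      Z (f q) * (1 / (6 * √3))) = _
    rw [g1, g2, g3]
    simp only [mul_one_div]
    exact (fD4p_normalForm _ _).symm

end Sufficiency

section Necessity

theorem exists_smul_of_eq_zero {F : Type} [NormedAddCommGroup F] [NormedSpace ℝ F]
    [FiniteDimensional ℝ F] {α : ℝ → F} (hα : ContDiff ℝ ∞ α) (h0 : α 0 = 0) :
    ∃ φ : ℝ → F, ContDiff ℝ ∞ φ ∧ (∀ h, α h = h • φ h) ∧ φ 0 = deriv α 0 := by
  have : CompleteSpace F := FiniteDimensional.complete ℝ F
  obtain ⟨k, hk, hk1, hk2⟩ := exists_hadamard_quotient (g := fun x : ℝ × ℝ => α x.1) (by fun_prop)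
  refine ⟨fun h => k (h, 0), by fun_prop, fun h => ?_, ?_⟩
  · have := hk1 h 0
    simpa [h0] using this
  · have hd : HasFDerivAt α (fderiv ℝ α 0) ((0 : ℝ), (0 : ℝ)).1 :=
      (hα.differentiable (by simp) 0).hasFDerivAt
    have := hd.comp ((0 : ℝ), (0 : ℝ)) hasFDerivAt_fst
    refine (hk2 0).trans ?_
    change fderiv ℝ (α ∘ Prod.fst) _ _ = _
    rw [this.fderiv]
    simp

theorem exists_sq_smul_of_deriv_eq_zero {α : ℝ → R3} (hα : ContDiff ℝ ∞ α) (h0 : α 0 = 0)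
    (h1 : deriv α 0 = 0) : ∃ z : ℝ → R3, ContDiff ℝ ∞ z ∧ ∀ h, α h = h ^ 2 • z h := by
  obtain ⟨φ, hφ, h2, h3⟩ := exists_smul_of_eq_zero hα h0
  obtain ⟨z, hz, h4, -⟩ := exists_smul_of_eq_zero hφ (h3.trans h1)
  exact ⟨z, hz, fun h => by rw [h2, h4, smul_smul, sq]⟩

theorem fderiv_apply_of_fD4p {za zb : ℝ → R3} (ha : ContDiff ℝ ∞ za) (hb : ContDiff ℝ ∞ zb)
    {Φ : R2 → R2} {Ψ : R3 → R3} (hΦ : ContDiff ℝ ∞ Φ) (hΨ : ContDiff ℝ ∞ Ψ) (hΦ0 : Φ 0 = 0)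
    (h : ∀ᶠ q in 𝓝 (0 : R2), Ψ (q.1 ^ 2 • za q.1 + q.2 ^ 2 • zb q.2) = fD4p (Φ q))
    (ξ : R2) :
    fderiv ℝ Ψ 0 (ξ.1 ^ 2 • za 0 + ξ.2 ^ 2 • zb 0) =
      ((fderiv ℝ Φ 0 ξ).1 * (fderiv ℝ Φ 0 ξ).2,
        (fderiv ℝ Φ 0 ξ).1 ^ 2 + 3 * (fderiv ℝ Φ 0 ξ).2 ^ 2, 0) ∧
    (fderiv ℝ Ψ 0 (ξ.1 ^ 3 • deriv za 0 + ξ.2 ^ 3 • deriv zb 0)).2.2 =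
      (fderiv ℝ Φ 0 ξ).1 ^ 2 * (fderiv ℝ Φ 0 ξ).2 + (fderiv ℝ Φ 0 ξ).2 ^ 3 := by
  obtain ⟨φ, hφ, h1, h2⟩ := exists_smul_of_eq_zero (α := fun h : ℝ => Φ (h • ξ)) (by fun_prop)
    (by simpa using hΦ0)
  have hφ0 : φ 0 = fderiv ℝ Φ 0 ξ := by
    rw [h2]
    have d1 : HasDerivAt (fun h : ℝ => h • ξ) ξ 0 := by
      simpa using! (hasDerivAt_id (0 : ℝ)).smul_const ξ
    have d2 : HasFDerivAt Φ (fderiv ℝ Φ 0) ((0 : ℝ) • ξ) := by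
      rw [zero_smul]
      exact (hΦ.differentiable (by simp) 0).hasFDerivAt
    exact (d2.comp_hasDerivAt (0 : ℝ) d1).deriv
  let z : ℝ → R3 := fun h => ξ.1 ^ 2 • za (h * ξ.1) + ξ.2 ^ 2 • zb (h * ξ.2)
  have hz : ContDiff ℝ ∞ z := by fun_prop
  have hz0 : z 0 = ξ.1 ^ 2 • za 0 + ξ.2 ^ 2 • zb 0 := by simp [z]
  have hz1 : deriv z 0 = ξ.1 ^ 3 • deriv za 0 + ξ.2 ^ 3 • deriv zb 0 := by
    have key : ∀ {c : ℝ → R3} (x : ℝ), ContDiff ℝ ∞ c →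
        HasDerivAt (fun h => x ^ 2 • c (h * x)) (x ^ 3 • deriv c 0) 0 := fun {c} x hc => by
      have d1 : HasDerivAt (fun h : ℝ => h * x) x 0 := by
        simpa using! (hasDerivAt_id (0 : ℝ)).mul_const x
      have d2 : HasDerivAt c (deriv c 0) 0 := (hc.differentiable (by simp) 0).hasDerivAt
      have d3 := (d2.scomp_of_eq (0 : ℝ) d1 (by simp)).const_smul (x ^ 2)
      rw [smul_smul, ← pow_succ] at d3
      exact d3
    exact ((key ξ.1 ha).add (key ξ.2 hb)).deriv
  have hline : ∀ᶠ u in 𝓝 (0 : ℝ), Ψ (u ^ 2 • z u) = fD4p (u • φ u) := by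
    have ht : Tendsto (fun u : ℝ => u • ξ) (𝓝 0) (𝓝 0) := by
      have : Continuous fun u : ℝ => u • ξ := by fun_prop
      exact this.tendsto' _ _ (by simp)
    filter_upwards [ht.eventually h] with u hu
    rw [← h1, ← hu]
    simp only [z, Prod.smul_fst, Prod.smul_snd, smul_eq_mul, smul_add, smul_smul, mul_pow]
  have hd : ∀ v, fderiv ℝ (fun P => (Ψ P).1) 0 v = (fderiv ℝ Ψ 0 v).1 ∧
      fderiv ℝ (fun P => (Ψ P).2.1) 0 v = (fderiv ℝ Ψ 0 v).2.1 ∧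
      fderiv ℝ (fun P => (Ψ P).2.2) 0 v = (fderiv ℝ Ψ 0 v).2.2 := fun v => by
    have d := (hΨ.differentiable (by simp) 0).hasFDerivAt
    exact ⟨by rw [d.fst.fderiv]; rfl, by rw [d.snd.fst.fderiv]; rfl,
      by rw [d.snd.snd.fderiv]; rfl⟩
  obtain ⟨e1, -⟩ := fderiv_apply_of_sq_mul (m := fun P => (Ψ P).1) (by fun_prop) hz
    (c := fun u => (φ u).1 * (φ u).2) (by fun_prop) (by
      filter_upwards [hline] with u hu
      simp only [hu, fD4p, Prod.smul_fst, Prod.smul_snd, smul_eq_mul]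
      ring)
  obtain ⟨e2, -⟩ := fderiv_apply_of_sq_mul (m := fun P => (Ψ P).2.1) (by fun_prop) hz
    (c := fun u => (φ u).1 ^ 2 + 3 * (φ u).2 ^ 2) (by fun_prop) (by
      filter_upwards [hline] with u hu
      simp only [hu, fD4p, Prod.smul_fst, Prod.smul_snd, smul_eq_mul]
      ring)
  obtain ⟨e3, e4⟩ := fderiv_apply_of_cube_mul (m := fun P => (Ψ P).2.2) (by fun_prop) hz
    (c := fun u => (φ u).1 ^ 2 * (φ u).2 + (φ u).2 ^ 3) (by fun_prop) (by
      filter_upwards [hline] with u hu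
      simp only [hu, fD4p, Prod.smul_fst, Prod.smul_snd, smul_eq_mul]
      ring)
  rw [(hd _).1, hz0, hφ0] at e1
  rw [(hd _).2.1, hz0, hφ0] at e2
  rw [(hd _).2.2, hz0] at e3
  rw [(hd _).2.2, hz1, hφ0] at e4
  exact ⟨Prod.ext e1 (Prod.ext e2 e3), e4⟩

/-- Necessary criterion for a `D₄⁺` singularity, at the origin. -/
theorem indep3_of_fD4p {za zb : ℝ → R3} (ha : ContDiff ℝ ∞ za) (hb : ContDiff ℝ ∞ zb)
    {Φ : R2 → R2} {Ψ : R3 → R3} (hΦ : ContDiff ℝ ∞ Φ) (hΨ : ContDiff ℝ ∞ Ψ) (hΦ0 : Φ 0 = 0)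
    (hΦi : Function.Injective (fderiv ℝ Φ 0))
    (h : ∀ᶠ q in 𝓝 (0 : R2), Ψ (q.1 ^ 2 • za q.1 + q.2 ^ 2 • zb q.2) = fD4p (Φ q)) :
    Indep3 (za 0) (zb 0) (deriv za 0) ∧ Indep3 (za 0) (zb 0) (deriv zb 0) := by
  obtain ⟨a0, a1⟩ := fderiv_apply_of_fD4p ha hb hΦ hΨ hΦ0 h (1, 0)
  obtain ⟨b0, b1⟩ := fderiv_apply_of_fD4p ha hb hΦ hΨ hΦ0 h (0, 1)
  obtain ⟨c0, -⟩ := fderiv_apply_of_fD4p ha hb hΦ hΨ hΦ0 h (1, 1)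
  have hsum : fderiv ℝ Φ 0 (1, 1) = fderiv ℝ Φ 0 (1, 0) + fderiv ℝ Φ 0 (0, 1) := by
    rw [← map_add]; simp
  rw [hsum] at c0
  simp only [one_pow, one_smul, ne_eq, OfNat.ofNat_ne_zero, not_false_eq_true, zero_pow,
    zero_smul, add_zero, zero_add] at a0 a1 b0 b1 c0
  rw [map_add, a0, b0] at c0
  have hdet : det2 (fderiv ℝ Φ 0 (1, 0)) (fderiv ℝ Φ 0 (0, 1)) ≠ 0 := fun h0 => by
    have key : ∀ x y : ℝ, fderiv ℝ Φ 0 (x, y) =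
        x • fderiv ℝ Φ 0 (1, 0) + y • fderiv ℝ Φ 0 (0, 1) := fun x y => by
      rw [← map_smul, ← map_smul, ← map_add]; simp
    have hker : ∀ x y : ℝ, x • fderiv ℝ Φ 0 (1, 0) + y • fderiv ℝ Φ 0 (0, 1) = 0 →
        x = 0 ∧ y = 0 := fun x y hxy => by
      rw [← key] at hxy
      exact Prod.mk.inj (hΦi (hxy.trans (map_zero _).symm))
    generalize fderiv ℝ Φ 0 (1, 0) = A at h0 hker
    generalize fderiv ℝ Φ 0 (0, 1) = B at h0 hker
    have e1 := hker B.2 (-A.2) (Prod.ext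
      (by simp only [det2] at h0; simp; linear_combination h0) (by simp; ring))
    have e2 := hker B.1 (-A.1) (Prod.ext (by simp; ring)
      (by simp only [det2] at h0; simp; linear_combination -h0))
    have hA : A = 0 := Prod.ext (neg_eq_zero.1 e2.2) (neg_eq_zero.1 e1.2)
    exact one_ne_zero (hker 1 0 (by simp [hA])).1
  generalize fderiv ℝ Φ 0 (1, 0) = A at *
  generalize fderiv ℝ Φ 0 (0, 1) = B at *
  have c1 := congrArg Prod.fst c0
  have c2 := congrArg (fun t : R3 => t.2.1) c0
  simp only [Prod.fst_add, Prod.snd_add] at c1 c2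
  have p1 : A.1 * B.2 + A.2 * B.1 = 0 := by linear_combination -c1
  have p2 : A.1 * B.1 + 3 * A.2 * B.2 = 0 := by linear_combination -c2 / 2
  have hA2 : A.2 ≠ 0 := fun h0 => hdet (by
    have h1 : A.1 * B.2 = 0 := by simpa [h0] using p1
    simp [det2, h0, h1])
  have hB2 : B.2 ≠ 0 := fun h0 => hdet (by
    have h1 : A.2 * B.1 = 0 := by simpa [h0] using p1
    simp [det2, h0, h1])
  have hA1 : 0 < A.1 ^ 2 + A.2 ^ 2 := by positivity
  have hB1 : 0 < B.1 ^ 2 + B.2 ^ 2 := by positivity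
  have hplane : (A.1 * A.2) * (B.1 ^ 2 + 3 * B.2 ^ 2) - (A.1 ^ 2 + 3 * A.2 ^ 2) * (B.1 * B.2) =
      det2 A B * (6 * (A.2 * B.2)) := by
    unfold det2
    linear_combination (A.2 * B.1 - A.1 * B.2) * p2
  have hplane' := mul_ne_zero hdet (mul_ne_zero (by norm_num : (6 : ℝ) ≠ 0) (mul_ne_zero hA2 hB2))
  rw [← hplane] at hplane'
  constructor <;> refine (indep3_of_det3_ne_zero ?_).of_map (L := fderiv ℝ Ψ 0) <;>
    simp only [det3, a0, b0, a1, b1]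
  · have := mul_ne_zero hplane' (mul_ne_zero hA2 hA1.ne')
    convert! this using 1
    ring
  · have := mul_ne_zero hplane' (mul_ne_zero hB2 hB1.ne')
    convert! this using 1
    ring

end Necessity

section Translation

/-- A surface whose partial derivatives split is a translation surface. -/
theorem eq_add_of_pu_pv {f : R2 → R3} (hf : ContDiff ℝ ∞ f) {p : R2} {α β : ℝ → R3}
    (hα : ContDiff ℝ ∞ α) (hβ : ContDiff ℝ ∞ β) (hα0 : α 0 = 0) (hβ0 : β 0 = 0)
    (hu : ∀ q, pu f q = deriv α (q.1 - p.1)) (hv : ∀ q, pv f q = deriv β (q.2 - p.2)) (q : R2) :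
    f q = f p + (α (q.1 - p.1) + β (q.2 - p.2)) := by
  have hd : ∀ x, HasFDerivAt (fun q : R2 => f q - (α (q.1 - p.1) + β (q.2 - p.2)))
      (fderiv ℝ f x - ((ContinuousLinearMap.fst ℝ ℝ ℝ).smulRight (deriv α (x.1 - p.1)) +
        (ContinuousLinearMap.snd ℝ ℝ ℝ).smulRight (deriv β (x.2 - p.2)))) x := fun x => by
    have d1 := (hf.differentiable (by simp) x).hasFDerivAt
    have d2 := (hα.differentiable (by simp) (x.1 - p.1)).hasDerivAt.hasFDerivAt.comp x
      ((hasFDerivAt_fst (𝕜 := ℝ) (p := x)).sub_const p.1)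
    have d3 := (hβ.differentiable (by simp) (x.2 - p.2)).hasDerivAt.hasFDerivAt.comp x
      ((hasFDerivAt_snd (𝕜 := ℝ) (p := x)).sub_const p.2)
    exact d1.sub (d2.add d3)
  have hz : ∀ x, fderiv ℝ (fun q : R2 => f q - (α (q.1 - p.1) + β (q.2 - p.2))) x = 0 := fun x => by
    rw [(hd x).fderiv]
    refine ContinuousLinearMap.ext fun w => ?_
    have hw : fderiv ℝ f x w = w.1 • pu f x + w.2 • pv f x := by
      rw [pu, pv, ← map_smul, ← map_smul, ← map_add]; simp
    simp [hw, hu, hv]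
  have := is_const_of_fderiv_eq_zero (fun x => (hd x).differentiableAt) hz q p
  simp only [sub_self, hα0, hβ0, add_zero, sub_zero] at this
  rw [← this]
  abel

/-- The translation components of a surface with split partial derivatives. -/
theorem exists_components {f : R2 → R3} (hf : ContDiff ℝ ∞ f) {a b : ℝ → R3}
    (hu : ∀ q, pu f q = a q.1) (hv : ∀ q, pv f q = b q.2) (p : R2) :
    ∃ α β : ℝ → R3, ContDiff ℝ ∞ α ∧ ContDiff ℝ ∞ β ∧ α 0 = 0 ∧ β 0 = 0 ∧
      (∀ q : R2, pu f q = deriv α (q.1 - p.1)) ∧ ∀ q : R2, pv f q = deriv β (q.2 - p.2) := by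
  have hline : ∀ (w : R2) (h : ℝ),
      HasDerivAt (fun h : ℝ => f (p + h • w) - f p) (fderiv ℝ f (p + h • w) w) h := fun w h => by
    have d1 : HasDerivAt (fun h : ℝ => p + h • w) w h := by
      simpa using! ((hasDerivAt_id h).smul_const w).const_add p
    exact ((hf.differentiable (by simp) (p + h • w)).hasFDerivAt.comp_hasDerivAt h d1).sub_const _
  refine ⟨fun h => f (p + h • (1, 0)) - f p, fun h => f (p + h • (0, 1)) - f p, by fun_prop,
    by fun_prop, by simp, by simp, fun q => ?_, fun q => ?_⟩
  · rw [(hline _ _).deriv, hu]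
    exact Eq.trans (by simp) (hu _).symm
  · rw [(hline _ _).deriv, hv]
    exact Eq.trans (by simp) (hv _).symm

/-- A germ equivalence to the standard `D₄⁺` singularity, recentred at the origins. -/
theorem aequiv_fD4p_iff {f : R2 → R3} (hfc : Continuous f) {p : R2} {α β : ℝ → R3}
    (hf : ∀ q, f q = f p + (α (q.1 - p.1) + β (q.2 - p.2))) :
    AEquiv f p fD4p 0 ↔ ∃ (Φ : R2 → R2) (Ψ : R3 → R3), ContDiff ℝ ∞ Φ ∧ ContDiff ℝ ∞ Ψ ∧
      Φ 0 = 0 ∧ Ψ 0 = 0 ∧ Function.Injective (fderiv ℝ Φ 0) ∧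
      Function.Injective (fderiv ℝ Ψ 0) ∧
      ∀ᶠ q in 𝓝 (0 : R2), Ψ (α q.1 + β q.2) = fD4p (Φ q) := by
  have hD0 : fD4p 0 = 0 := by simp [fD4p]
  constructor
  · rintro ⟨Φ, Ψ, hΦ, hΦ0, hΨ, hΨ0, hev⟩
    obtain ⟨Φ', hΦ', hΦe, hΦi⟩ := hΦ.exists_contDiff
    obtain ⟨Ψ', hΨ', hΨe, hΨi⟩ := hΨ.exists_contDiff
    have ht : Tendsto (fun q : R2 => p + q) (𝓝 0) (𝓝 p) := by
      have : Continuous fun q : R2 => p + q := by fun_prop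
      exact this.tendsto' _ _ (by simp)
    refine ⟨fun q => Φ' (p + q), fun P => Ψ' (f p + P), by fun_prop, by fun_prop,
      by simp [hΦe.eq_of_nhds, hΦ0], by simp [hΨe.eq_of_nhds, hΨ0, hD0], ?_, ?_, ?_⟩
    · simpa [fderiv_comp_add_left] using hΦi
    · simpa [fderiv_comp_add_left] using hΨi
    · filter_upwards [ht.eventually hev, ht.eventually hΦe,
        ht.eventually (hfc.continuousAt.eventually hΨe)] with q h1 h2 h3
      have h4 := hf (p + q)
      simp only [Prod.fst_add, Prod.snd_add, add_sub_cancel_left] at h4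
      rw [h2, ← h1, ← h3, h4]
  · rintro ⟨Φ, Ψ, hΦ, hΨ, hΦ0, hΨ0, hΦi, hΨi, hev⟩
    have ht : Tendsto (fun q : R2 => q - p) (𝓝 p) (𝓝 0) := by
      have : Continuous fun q : R2 => q - p := by fun_prop
      exact this.tendsto' _ _ (by simp)
    refine ⟨fun q => Φ (q - p), fun P => Ψ (P - f p), isLocalDiffeoAt_of_injective (by fun_prop) ?_,
      by simp [hΦ0], isLocalDiffeoAt_of_injective (by fun_prop) ?_, by simp [hΨ0, hD0], ?_⟩
    · simpa [fderiv_comp_sub] using hΦi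
    · simpa [fderiv_comp_sub] using hΨi
    · filter_upwards [ht.eventually hev] with q hq
      rw [← hq, hf q, add_sub_cancel_left]
      rfl

theorem deriv_eq_zero_of_fD4p {α β : ℝ → R3} (hα : ContDiff ℝ ∞ α) (hβ : ContDiff ℝ ∞ β)
    (hα0 : α 0 = 0) (hβ0 : β 0 = 0) {Φ : R2 → R2} {Ψ : R3 → R3} (hΦ : ContDiff ℝ ∞ Φ)
    (hΨ : ContDiff ℝ ∞ Ψ) (hΦ0 : Φ 0 = 0) (hΨi : Function.Injective (fderiv ℝ Ψ 0))
    (h : ∀ᶠ q in 𝓝 (0 : R2), Ψ (α q.1 + β q.2) = fD4p (Φ q)) :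
    deriv α 0 = 0 ∧ deriv β 0 = 0 := by
  have hD : HasFDerivAt fD4p (0 : R2 →L[ℝ] R3) 0 := by
    have h1 := hasFDerivAt_fst (𝕜 := ℝ) (p := (0 : R2))
    have h2 := hasFDerivAt_snd (𝕜 := ℝ) (p := (0 : R2))
    have := (h1.mul h2).prodMk (((h1.pow 2).add ((h2.pow 2).const_mul 3)).prodMk
      (((h1.pow 2).mul h2).add (h2.pow 3)))
    convert! this using 1
    simp only [Prod.fst_zero, Prod.snd_zero]
    ext <;> simp
  have hR : HasFDerivAt (fun q => fD4p (Φ q)) (0 : R2 →L[ℝ] R3) 0 := by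
    rw [← hΦ0] at hD
    simpa using! hD.comp (0 : R2) (hΦ.differentiable (by simp) 0).hasFDerivAt
  have key : ∀ {γ : ℝ → R3}, ContDiff ℝ ∞ γ → γ 0 = 0 → ∀ w : R2,
      (∀ u : ℝ, α (u • w).1 + β (u • w).2 = γ u) → deriv γ 0 = 0 := fun {γ} hγ hγ0 w hw => by
    have d1 : HasDerivAt (fun u : ℝ => u • w) w 0 := by
      simpa using! (hasDerivAt_id (0 : ℝ)).smul_const w
    have ht : Tendsto (fun u : ℝ => u • w) (𝓝 0) (𝓝 0) := by
      simpa using d1.continuousAt.tendsto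
    have hR' : HasFDerivAt (fun q => fD4p (Φ q)) (0 : R2 →L[ℝ] R3) ((0 : ℝ) • w) := by
      rwa [zero_smul]
    have d2 := hR'.comp_hasDerivAt (0 : ℝ) d1
    have hΨd : HasFDerivAt Ψ (fderiv ℝ Ψ 0) (γ 0) := by
      rw [hγ0]
      exact (hΨ.differentiable (by simp) 0).hasFDerivAt
    have d3 := hΨd.comp_hasDerivAt (0 : ℝ) (hγ.differentiable (by simp) 0).hasDerivAt
    have he : (fun u => Ψ (γ u)) =ᶠ[𝓝 0] fun u => fD4p (Φ (u • w)) := by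
      filter_upwards [ht.eventually h] with u hu
      rw [← hu, hw]
    have := d3.unique (d2.congr_of_eventuallyEq he)
    exact hΨi (by simpa using this)
  exact ⟨key hα hα0 (1, 0) fun u => by simp [hβ0], key hβ hβ0 (0, 1) fun u => by simp [hα0]⟩

/-- Rescaling the two null directions preserves `D₄⁺` singularities. -/
theorem AEquiv.fD4p_of_rescale {f F : R2 → R3} (hf : ContDiff ℝ ∞ f) (hF : ContDiff ℝ ∞ F)
    {a b : ℝ → R3} (hu : ∀ q, pu f q = a q.1) (hv : ∀ q, pv f q = b q.2) {s t : ℝ} (hs : s ≠ 0)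
    (ht : t ≠ 0) (hFu : ∀ q, pu F q = s • pu f q) (hFv : ∀ q, pv F q = t • pv f q) {p : R2}
    (h : AEquiv f p fD4p 0) : AEquiv F p fD4p 0 := by
  obtain ⟨α, β, hα, hβ, hα0, hβ0, hαd, hβd⟩ := exists_components hf hu hv p
  obtain ⟨Φ, Ψ, hΦ, hΨ, hΦ0, -, hΦi, hΨi, hev⟩ :=
    (aequiv_fD4p_iff hf.continuous (eq_add_of_pu_pv hf hα hβ hα0 hβ0 hαd hβd)).1 h
  obtain ⟨hα1, hβ1⟩ := deriv_eq_zero_of_fD4p hα hβ hα0 hβ0 hΦ hΨ hΦ0 hΨi hev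
  obtain ⟨za, hza, hαz⟩ := exists_sq_smul_of_deriv_eq_zero hα hα0 hα1
  obtain ⟨zb, hzb, hβz⟩ := exists_sq_smul_of_deriv_eq_zero hβ hβ0 hβ1
  simp only [hαz, hβz] at hev
  obtain ⟨ia, ib⟩ := indep3_of_fD4p hza hzb hΦ hΨ hΦ0 hΦi hev
  have hFe := eq_add_of_pu_pv (p := p) (α := fun h => s • α h) (β := fun h => t • β h) hF
    (by fun_prop) (by fun_prop) (by simp [hα0]) (by simp [hβ0])
    (fun q => by rw [hFu, hαd, deriv_fun_const_smul _ (hα.differentiable (by simp) _)])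
    (fun q => by rw [hFv, hβd, deriv_fun_const_smul _ (hβ.differentiable (by simp) _)])
  refine (aequiv_fD4p_iff (α := fun h => s • α h) (β := fun h => t • β h) hF.continuous hFe).2 ?_
  have da : deriv (fun h => s • za h) 0 = s • deriv za 0 :=
    deriv_fun_const_smul _ (hza.differentiable (by simp) _)
  have db : deriv (fun h => t • zb h) 0 = t • deriv zb 0 :=
    deriv_fun_const_smul _ (hzb.differentiable (by simp) _)
  obtain ⟨Φ', Ψ', h1, h2, h3, h4, h5, h6, h7⟩ := exists_fD4p_of_indep3
    (a := fun h => s • za h) (b := fun h => t • zb h) (by fun_prop) (by fun_prop)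
    (by rw [da]; exact ia.smul hs ht hs) (by rw [db]; exact ib.smul hs ht ht)
  refine ⟨Φ', Ψ', h1, h2, h3, h4, h5, h6, ?_⟩
  filter_upwards [h7] with q hq
  rw [← hq, hαz, hβz, smul_comm s, smul_comm t]

end Translation

/-- Rescaling the Weierstrass data `ω1`, `ω2` by nonzero constants preserves `D₄⁺`
singularities. -/
theorem IsGTMS.aequiv_fD4p_of_rescale {f F : R2 → R3} {g1 g2 w1 w2 : ℝ → ℝ} {s t : ℝ}
    (hf : IsGTMS f g1 g2 w1 w2) (hF : IsGTMS F g1 g2 (fun u => s * w1 u) fun v => t * w2 v)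
    (hs : s ≠ 0) (ht : t ≠ 0) {p : R2} (h : AEquiv f p fD4p 0) : AEquiv F p fD4p 0 := by
  refine h.fD4p_of_rescale hf.smooth_f hF.smooth_f
    (a := fun u => ((-1 - g1 u ^ 2) * w1 u / 2, (1 - g1 u ^ 2) * w1 u / 2, g1 u * w1 u))
    (b := fun v => ((1 + g2 v ^ 2) * w2 v / 2, (1 - g2 v ^ 2) * w2 v / 2, -(g2 v * w2 v)))
    hf.deriv_u hf.deriv_v hs ht (fun q => ?_) fun q => ?_
  · rw [hF.deriv_u, hf.deriv_u]
    refine Prod.ext ?_ (Prod.ext ?_ ?_) <;> simp <;> ring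
  · rw [hF.deriv_v, hf.deriv_v]
    refine Prod.ext ?_ (Prod.ext ?_ ?_) <;> simp <;> ring

theorem invariance_D4_plus
    (f fhat : R2 → R3) (F : ℝ → R2 → R3) (g1 g2 w1 w2 : ℝ → ℝ)
    (hf : IsGTMS f g1 g2 w1 w2)
    (hF : ∀ θ : ℝ, IsGTMS (F θ) g1 g2
      (fun u => Real.exp θ * w1 u) (fun v => Real.exp (-θ) * w2 v))
    (hfhat : IsGTMS fhat g1 g2 w1 (fun v => -w2 v))
    (p : R2) (hω : w1 p.1 * w2 p.2 = 0) :
    (AEquiv f p fD4p (0, 0) ↔ ∀ θ : ℝ, AEquiv (F θ) p fD4p (0, 0)) ∧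
    (AEquiv f p fD4p (0, 0) ↔ AEquiv fhat p fD4p (0, 0)) := by
  refine ⟨⟨fun h θ => ?_, fun h => ?_⟩, fun h => ?_, fun h => ?_⟩
  · exact hf.aequiv_fD4p_of_rescale (hF θ) (exp_ne_zero _) (exp_ne_zero _) h
  · exact (hF 0).aequiv_fD4p_of_rescale (s := 1) (t := 1) (by simpa using hf) one_ne_zero
      one_ne_zero (h 0)
  · exact hf.aequiv_fD4p_of_rescale (s := 1) (t := -1) (by simpa using hfhat) one_ne_zero
      (by norm_num) h
  · exact hfhat.aequiv_fD4p_of_rescale (s := 1) (t := -1) (by simpa using hf) one_ne_zero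
      (by norm_num) h
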